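/- Let (A, φ) be a noncommutative probability space, Φ : T(T_+(A)) → ℂ the character extending φ, Φ̃ : H_S(A) → ℂ the character extending φ, ρ̃ = log*(Φ̃), and ι : T(T_+(A)) → H_S(A) the algebra morphism with ι(a_1⋯a_n) = Σ_{t∈ST(n)} t ⊗ a_1⋯a_n. Then ρ := ρ̃ ∘ ι is an infinitesimal character on T(T_+(A)) and Φ = exp*(ρ). -/

import Mathlib

open scoped BigOperators

/-- Planar rooted trees (rose trees). -/
inductive PTree : Type
  | node : List PTree → PTree

namespace PTree

/-- The single-vertex tree (a leaf). -/
abbrev leaf : PTree := .node []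

/-- Subtree at a given path from the root (entries select children). -/
def subtreeAt : List ℕ → PTree → Option PTree
  | [], t => some t
  | i :: p, node cs => (cs[i]?).bind (subtreeAt p)

/-- `p` is (the path of) a vertex of `t`. -/
def IsVertex (t : PTree) (p : List ℕ) : Prop := (subtreeAt p t).isSome

/-- `p` is a leaf of `t`. -/
def IsLeafAt (t : PTree) (p : List ℕ) : Prop := subtreeAt p t = some leaf

/-- `p` is an internal (non-leaf) vertex of `t`. -/
def IsInternalAt (t : PTree) (p : List ℕ) : Prop :=
  ∃ cs, subtreeAt p t = some (node cs) ∧ cs ≠ []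

/-- Schröder trees: every internal vertex has at least two children. -/
inductive IsSchroder : PTree → Prop
  | leaf : IsSchroder (node [])
  | node (cs : List PTree) : 2 ≤ cs.length → (∀ c ∈ cs, IsSchroder c) → IsSchroder (node cs)

/-- Number of leaves of a tree. -/
noncomputable def numLeaves (t : PTree) : ℕ := Nat.card {p : List ℕ // IsLeafAt t p}

/-- Number of sectors between consecutive leaves. -/
noncomputable def numSectors (t : PTree) : ℕ := numLeaves t - 1

/-- Number of internal vertices. -/
noncomputable def numInternal (t : PTree) : ℕ := Nat.card {p : List ℕ // IsInternalAt t p}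

/-- The set of Schröder trees with `n+1` leaves. -/
def ST (n : ℕ) : Set PTree := {t | IsSchroder t ∧ numLeaves t = n + 1}

/-- Number of surjective strictly order-preserving maps from the poset of internal
vertices of `t` (i.e. the vertex poset of the skeleton `sk(t)`, with the root minimal,
the order being the ancestor/prefix order) onto `{1, …, k}`. This is `ω_k(sk(t))`. -/
noncomputable def omegaSkK (t : PTree) (k : ℕ) : ℕ :=
  Nat.card {f : {p : List ℕ // IsInternalAt t p} → Fin k //
    Function.Surjective f ∧ ∀ v w, v.1 <+: w.1 → v ≠ w → f v < f w}

/-- The Murua coefficient `ω(sk(t))` of the skeleton of `t`. -/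
noncomputable def omegaSk (t : PTree) : ℂ :=
  ∑ k ∈ Finset.Icc 1 (numInternal t), ((-1 : ℂ) ^ (k + 1) / (k : ℂ)) * (omegaSkK t k : ℂ)

/-- The subtree of `t` at path `p` (junk value: a leaf). -/
noncomputable def subtree! (t : PTree) (p : List ℕ) : PTree := (subtreeAt p t).getD leaf

/-- Number of leaves of `t` strictly to the left of the subtree at `p`. -/
noncomputable def leavesBefore (t : PTree) (p : List ℕ) : ℕ :=
  Nat.card {q : List ℕ // IsLeafAt t q ∧ List.Lex (· < ·) q p ∧ ¬ p <+: q}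

/-- Sector number `i` (0-indexed: the sector between the `(i+1)`-st and `(i+2)`-nd leaves of `t`)
lies strictly inside the subtree of `t` rooted at `p`. -/
def SectorIn (t : PTree) (p : List ℕ) (i : ℕ) : Prop :=
  leavesBefore t p ≤ i ∧ i + 2 ≤ leavesBefore t p + numLeaves (subtree! t p)

/-- The internal vertex `v` of `t` owns sector `i`: the sector lies in the corolla at `v`,
i.e. inside the subtree at `v` but not inside the subtree at any strictly deeper vertex. -/
def OwnsSector (t : PTree) (v : List ℕ) (i : ℕ) : Prop :=
  IsInternalAt t v ∧ SectorIn t v i ∧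
    ∀ w, IsInternalAt t w → v <+: w → w ≠ v → ¬ SectorIn t w i

/-- Sectors `i` and `j` belong to the same block of the noncrossing partition `π(t)`. -/
def SameOwner (t : PTree) (i j : ℕ) : Prop := ∃ v, OwnsSector t v i ∧ OwnsSector t v j

open Classical in
/-- `φ_{π(t)}(a_1,…,a_n)`: the product over the blocks of the noncrossing partition `π(t)`
(one block per internal vertex `v`, consisting of the sectors owned by `v`) of `φ` applied to
the ordered product of the corresponding letters of `w`. -/
noncomputable def phiPi {A : Type*} [Ring A] (φ : A → ℂ) (t : PTree) (w : List A) : ℂ :=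
  ∏ᶠ v ∈ {v : List ℕ | IsInternalAt t v},
    φ ((((List.range w.length).filter fun i => OwnsSector t v i).map fun i => w.getD i 0).prod)

/-- A corolla: a root whose (at least two) children are all leaves. -/
def corolla (m : ℕ) : PTree := node (List.replicate m leaf)

/-- `t` is a corolla. -/
def IsCorolla (t : PTree) : Prop := ∃ m, 2 ≤ m ∧ t = corolla m

/-- Graft a tree `s` onto the leftmost leaf of `t`. -/
def graftLeftmost : PTree → PTree → PTree
  | node [], s => s
  | node (c :: cs), s => node (graftLeftmost c s :: cs)

/-- Trees obtained from the single-vertex tree by repeatedly grafting a corolla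
onto the leftmost leaf. -/
inductive IsBST : PTree → Prop
  | single : IsBST leaf
  | graft (t : PTree) (m : ℕ) : IsBST t → 2 ≤ m → IsBST (graftLeftmost t (corolla m))

/-- Schröder trees whose leftmost child of the root is a leaf. -/
def IsPST (t : PTree) : Prop := ∃ cs, t = node (leaf :: cs)

end PTree
namespace PTree

mutual
  /-- List of all vertex paths of a tree. -/
  def verticesList : PTree → List (List ℕ)
    | .node cs => [] :: verticesListAux 0 cs
  def verticesListAux : ℕ → List PTree → List (List ℕ)
    | _, [] => []
    | i, c :: cs => (verticesList c).map (i :: ·) ++ verticesListAux (i + 1) cs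
end

open Classical in
/-- The `Finset` of internal vertices of `t`. -/
noncomputable def internalFinset (t : PTree) : Finset (List ℕ) :=
  ((verticesList t).filter fun p => decide (IsInternalAt t p)).toFinset

open Classical in
/-- The admissible cuts of a Schröder tree `t`: sets of internal vertices such that every
path from the root to a leaf contains at most one of them (equivalently, antichains for
the ancestor/prefix order). -/
noncomputable def cutsFinset (t : PTree) : Finset (Finset (List ℕ)) :=
  (internalFinset t).powerset.filter fun c => ∀ v ∈ c, ∀ w ∈ c, v ≠ w → ¬ v <+: w

/-- A vertex path lies on the leftmost branch iff it consists of zeros. -/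
def OnLeftBranch (v : List ℕ) : Prop := v = List.replicate v.length 0

open Classical in
/-- `Adm_≺(t)`: admissible cuts whose trunk contains the leftmost leaf of `t`,
i.e. cuts containing no vertex of the leftmost branch. -/
noncomputable def cutsPrecFinset (t : PTree) : Finset (Finset (List ℕ)) :=
  (cutsFinset t).filter fun c => ∀ v ∈ c, ¬ OnLeftBranch v

open Classical in
/-- `Adm(t) \ Adm_≺(t)`: the admissible cuts containing a vertex of the leftmost branch. -/
noncomputable def cutsSuccFinset (t : PTree) : Finset (Finset (List ℕ)) :=
  (cutsFinset t).filter fun c => ∃ v ∈ c, OnLeftBranch v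

/-- Replace the subtree at a given path by a leaf. -/
def replaceLeaf : List ℕ → PTree → PTree
  | [], _ => leaf
  | i :: p, node cs => node (cs.set i (replaceLeaf p (cs.getD i leaf)))

/-- The vertices of a cut, sorted from left to right. -/
noncomputable def sortCut (t : PTree) (c : Finset (List ℕ)) : List (List ℕ) :=
  c.toList.mergeSort fun v w => Nat.ble (leavesBefore t v) (leavesBefore t w)

/-- The trunk `R_c(t)`: replace the subtree at each vertex of the cut by a leaf. -/
noncomputable def trunkTree (t : PTree) (c : Finset (List ℕ)) : PTree :=
  (sortCut t c).foldl (fun s v => replaceLeaf v s) t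

open Classical in
/-- Sector `i` of `t` is removed by the cut `c` (it lies in one of the pruned subtrees). -/
noncomputable def RemovedIdx (t : PTree) (c : Finset (List ℕ)) (i : ℕ) : Prop :=
  ∃ v ∈ c, leavesBefore t v ≤ i ∧ i < leavesBefore t v + numSectors (subtree! t v)

/-- A decorated forest: a list of Schröder trees, each `t` decorated by a word of length
`numSectors t` labelling the sectors between consecutive leaves from left to right. -/
abbrev DForest (A : Type*) := List (PTree × List A)

/-- A genuine decorated tree: a non-unit Schröder tree with matching decoration. -/
def GoodTree {A : Type*} (d : PTree × List A) : Prop :=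
  IsSchroder d.1 ∧ d.1 ≠ leaf ∧ d.2.length = numSectors d.1

/-- A genuine decorated forest. -/
def GoodForest {A : Type*} (F : DForest A) : Prop := ∀ d ∈ F, GoodTree d

open Classical in
/-- The decoration of the trunk `R_c(t ⊗ w)`: the letters of `w` at the sectors
not removed by the cut, in their original order. -/
noncomputable def trunkWord {A : Type*} [Zero A] (t : PTree) (c : Finset (List ℕ))
    (w : List A) : List A :=
  (((List.range w.length).filter fun i => decide (¬ RemovedIdx t c i)).map fun i => w.getD i 0)

open Classical in
/-- The trunk `R_c(t ⊗ w)` as a decorated forest (empty if the trunk is the unit,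
i.e. the single-leaf tree, which is identified with `1`). -/
noncomputable def trunkPart {A : Type*} [Zero A] (d : PTree × List A)
    (c : Finset (List ℕ)) : DForest A :=
  if trunkTree d.1 c = leaf then [] else [(trunkTree d.1 c, trunkWord d.1 c d.2)]

/-- The pruning `P_c(t ⊗ w)`: the ordered forest of decorated subtrees rooted at the
vertices of the cut (left to right), each carrying the contiguous subword of `w`
decorating its sectors. -/
noncomputable def prunePart {A : Type*} (d : PTree × List A)
    (c : Finset (List ℕ)) : DForest A :=
  (sortCut d.1 c).map fun v =>
    (subtree! d.1 v, (d.2.drop (leavesBefore d.1 v)).take (numSectors (subtree! d.1 v)))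

/-- All splittings `R_c(F) ⊗ P_c(F)` of a decorated forest given by tuples of admissible
cuts (one cut per tree): the combinatorial coproduct `δ_A`. -/
noncomputable def forestSplits {A : Type*} [Zero A] :
    DForest A → List (DForest A × DForest A)
  | [] => [([], [])]
  | d :: ds => (cutsFinset d.1).toList.flatMap fun c =>
      (forestSplits ds).map fun pr => (trunkPart d c ++ pr.1, prunePart d c ++ pr.2)

/-- The splittings appearing in `δ_{≺,A}`: the first tree is cut along `Adm_≺`, the
remaining ones along all admissible cuts. -/
noncomputable def forestSplitsPrec {A : Type*} [Zero A] :
    DForest A → List (DForest A × DForest A)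
  | [] => []
  | d :: ds => (cutsPrecFinset d.1).toList.flatMap fun c =>
      (forestSplits ds).map fun pr => (trunkPart d c ++ pr.1, prunePart d c ++ pr.2)

/-- The splittings appearing in `δ_{≻,A} = δ_A − δ_{≺,A}`. -/
noncomputable def forestSplitsSucc {A : Type*} [Zero A] :
    DForest A → List (DForest A × DForest A)
  | [] => []
  | d :: ds => (cutsSuccFinset d.1).toList.flatMap fun c =>
      (forestSplits ds).map fun pr => (trunkPart d c ++ pr.1, prunePart d c ++ pr.2)

/-- The convolution product `f * g = m_ℂ ∘ (f ⊗ g) ∘ δ_A` of linear functionals on the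
Hopf algebra `H_S(A)` of decorated Schröder trees (described on the basis of decorated
forests). -/
noncomputable def convD {A : Type*} [Zero A] (f g : DForest A → ℂ) : DForest A → ℂ :=
  fun F => ((forestSplits F).map fun pr => f pr.1 * g pr.2).sum

/-- The left half-shuffle product `f ≺̃ g = m_ℂ ∘ (f ⊗ g) ∘ δ_{≺,A}`. -/
noncomputable def precD {A : Type*} [Zero A] (f g : DForest A → ℂ) : DForest A → ℂ :=
  fun F => ((forestSplitsPrec F).map fun pr => f pr.1 * g pr.2).sum

/-- The right half-shuffle product `f ≻̃ g = m_ℂ ∘ (f ⊗ g) ∘ δ_{≻,A}`. -/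
noncomputable def succD {A : Type*} [Zero A] (f g : DForest A → ℂ) : DForest A → ℂ :=
  fun F => ((forestSplitsSucc F).map fun pr => f pr.1 * g pr.2).sum

open Classical in
/-- The counit `ε_A` of `H_S(A)` as a functional. -/
noncomputable def epsD {A : Type*} : DForest A → ℂ := fun F => if F = [] then 1 else 0

open Classical in
/-- The character `Φ̃ : H_S(A) → ℂ` extending `φ`: it sends a decorated tree `t ⊗ w` to
`φ(a_1 ⋯ a_n)` if `t` is a corolla and to `0` otherwise, multiplicatively on forests. -/
noncomputable def charD {A : Type*} [Ring A] (φ : A → ℂ) : DForest A → ℂ :=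
  fun F => (F.map fun d => if IsCorolla d.1 then φ d.2.prod else 0).prod

/-- `Φ̂ = Φ̃ − ε_A`. -/
noncomputable def charHatD {A : Type*} [Ring A] (φ : A → ℂ) : DForest A → ℂ :=
  fun F => charD φ F - epsD F

/-- Convolution powers `f^{*k}` (with `f^{*0} = ε_A`). -/
noncomputable def convPowD {A : Type*} [Zero A] (f : DForest A → ℂ) : ℕ → DForest A → ℂ
  | 0 => epsD
  | k + 1 => convD f (convPowD f k)

/-- Left half-shuffle powers `α^{≺̃ k}`, with `α^{≺̃ 0} = ε_A` and
`α^{≺̃ k} = α ≺̃ α^{≺̃ (k−1)}`. -/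
noncomputable def precPowD {A : Type*} [Zero A] (α : DForest A → ℂ) : ℕ → DForest A → ℂ
  | 0 => epsD
  | k + 1 => precD α (precPowD α k)

/-- Right half-shuffle powers `α^{≻̃ k}`, with `α^{≻̃ 0} = ε_A` and
`α^{≻̃ k} = α^{≻̃ (k−1)} ≻̃ α`. -/
noncomputable def succPowD {A : Type*} [Zero A] (α : DForest A → ℂ) : ℕ → DForest A → ℂ
  | 0 => epsD
  | k + 1 => succD (succPowD α k) α

/-- The left half-shuffle exponential `E_≺̃(α) = Σ_{k ≥ 0} α^{≺̃ k}`. -/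
noncomputable def ePrecD {A : Type*} [Zero A] (α : DForest A → ℂ) : DForest A → ℂ :=
  fun F => ∑ᶠ k : ℕ, precPowD α k F

/-- The right half-shuffle exponential `E_≻̃(α) = Σ_{k ≥ 0} α^{≻̃ k}`. -/
noncomputable def eSuccD {A : Type*} [Zero A] (α : DForest A → ℂ) : DForest A → ℂ :=
  fun F => ∑ᶠ k : ℕ, succPowD α k F

/-- The convolution exponential `exp^*(α) = Σ_{k ≥ 0} α^{*k} / k!`. -/
noncomputable def expStarD {A : Type*} [Zero A] (α : DForest A → ℂ) : DForest A → ℂ :=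
  fun F => ∑ᶠ k : ℕ, ((k.factorial : ℂ))⁻¹ * convPowD α k F

/-- The convolution logarithm `log^*(Φ̃) = Σ_{k ≥ 1} ((−1)^{k+1}/k) (Φ̃ − ε_A)^{*k}`. -/
noncomputable def logStarD {A : Type*} [Ring A] (φ : A → ℂ) : DForest A → ℂ :=
  fun F => ∑ᶠ k ∈ Set.Ici (1 : ℕ), ((-1 : ℂ) ^ (k + 1) / (k : ℂ)) * convPowD (charHatD φ) k F

/-- An infinitesimal character of `H_S(A)`: it vanishes on the unit (empty forest) and on
products of two or more nonempty forests. -/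
def IsInfCharD {A : Type*} (α : DForest A → ℂ) : Prop :=
  α [] = 0 ∧ ∀ F G : DForest A, F ≠ [] → G ≠ [] → α (F ++ G) = 0

end PTree
section Words

variable {A : Type*}

/-- A word: a nonempty list of elements of `A` (an element `a_1 ⋯ a_n ∈ A^{⊗n}`, `n ≥ 1`). -/
def WordNE (A : Type*) := {l : List A // l ≠ []}

/-- A sentence: a bar product `w_1 | ⋯ | w_m` of words, an element of the basis of the
double tensor algebra `T(T_+(A))`. The empty sentence is the unit `1`. -/
abbrev Sentence (A : Type*) := List (WordNE A)

open Classical in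
/-- Turn a list of lists into a sentence (the lists arising below are always nonempty). -/
noncomputable def mkWords (ls : List (List A)) : Sentence A :=
  (ls.filter fun l => decide (l ≠ [])).attach.map fun x =>
    ⟨x.1, by have h := List.of_mem_filter x.2; simpa using h⟩

/-- Group a list of natural numbers into maximal runs of consecutive integers. -/
def natRuns : List ℕ → List (List ℕ)
  | [] => []
  | x :: xs =>
    match natRuns xs with
    | (y :: ys) :: rest => if x + 1 = y then (x :: y :: ys) :: rest else [x] :: (y :: ys) :: rest
    | _ => [[x]]

open Classical in
/-- The two sides `a_S ⊗ a_{J^S}` of the cut of a word `w` along a subset `S` of its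
letter positions: `a_S` is the subword at the positions of `S` (the unit, i.e. the empty
sentence, if `S = ∅`), and `a_{J^S}` is the bar product of the subwords corresponding to
the maximal intervals of the complement of `S`. -/
noncomputable def wordCut [Zero A] (w : WordNE A) (S : Finset (Fin w.1.length)) :
    Sentence A × Sentence A :=
  (mkWords [(S.sort (· ≤ ·)).map w.1.get],
   mkWords (((natRuns ((((Finset.univ : Finset (Fin w.1.length)) \ S).sort (· ≤ ·)).map
      Fin.val))).map fun r => r.map fun i => w.1.getD i 0))

/-- All terms of the coproduct `Δ` of `T(T_+(A))` on a sentence: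
`Δ(a_1⋯a_n) = Σ_{S ⊆ [n]} a_S ⊗ a_{J^S}`, extended multiplicatively to bar products. -/
noncomputable def sentenceCuts [Zero A] : Sentence A → List (Sentence A × Sentence A)
  | [] => [([], [])]
  | w :: ws => (Finset.univ : Finset (Finset (Fin w.1.length))).toList.flatMap fun S =>
      (sentenceCuts ws).map fun pr => ((wordCut w S).1 ++ pr.1, (wordCut w S).2 ++ pr.2)

open Classical in
/-- The terms of the half-coproduct `Δ_≺` (sum over `S` containing the first letter,
`Δ_≺(w_1|⋯|w_m) = Δ_≺(w_1) | Δ(w_2|⋯|w_m)`). -/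
noncomputable def sentenceCutsPrec [Zero A] : Sentence A → List (Sentence A × Sentence A)
  | [] => []
  | w :: ws => (((Finset.univ : Finset (Finset (Fin w.1.length))).filter
        fun S => ∃ j ∈ S, j.val = 0)).toList.flatMap fun S =>
      (sentenceCuts ws).map fun pr => ((wordCut w S).1 ++ pr.1, (wordCut w S).2 ++ pr.2)

open Classical in
/-- The terms of the half-coproduct `Δ_≻` (sum over `S` not containing the first letter). -/
noncomputable def sentenceCutsSucc [Zero A] : Sentence A → List (Sentence A × Sentence A)
  | [] => []
  | w :: ws => (((Finset.univ : Finset (Finset (Fin w.1.length))).filter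
        fun S => ∀ j ∈ S, j.val ≠ 0)).toList.flatMap fun S =>
      (sentenceCuts ws).map fun pr => ((wordCut w S).1 ++ pr.1, (wordCut w S).2 ++ pr.2)

/-- The convolution product `f * g = m_ℂ ∘ (f ⊗ g) ∘ Δ` on linear functionals of
`T(T_+(A))` (described on the basis of sentences). -/
noncomputable def convW [Zero A] (f g : Sentence A → ℂ) : Sentence A → ℂ :=
  fun s => ((sentenceCuts s).map fun pr => f pr.1 * g pr.2).sum

/-- The left half-shuffle product `f ≺ g = m_ℂ ∘ (f ⊗ g) ∘ Δ_≺`. -/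
noncomputable def precW [Zero A] (f g : Sentence A → ℂ) : Sentence A → ℂ :=
  fun s => ((sentenceCutsPrec s).map fun pr => f pr.1 * g pr.2).sum

/-- The right half-shuffle product `f ≻ g = m_ℂ ∘ (f ⊗ g) ∘ Δ_≻`. -/
noncomputable def succW [Zero A] (f g : Sentence A → ℂ) : Sentence A → ℂ :=
  fun s => ((sentenceCutsSucc s).map fun pr => f pr.1 * g pr.2).sum

open Classical in
/-- The counit `ε` of `T(T_+(A))` as a functional. -/
noncomputable def epsW : Sentence A → ℂ := fun s => if s = [] then 1 else 0

/-- A character of `T(T_+(A))`: a unital multiplicative functional. -/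
def IsCharW (Φ : Sentence A → ℂ) : Prop :=
  Φ [] = 1 ∧ ∀ s t : Sentence A, Φ (s ++ t) = Φ s * Φ t

/-- An infinitesimal character of `T(T_+(A))`: it vanishes on the unit and on bar
products of two or more words. -/
def IsInfCharW (α : Sentence A → ℂ) : Prop :=
  α [] = 0 ∧ ∀ s t : Sentence A, s ≠ [] → t ≠ [] → α (s ++ t) = 0

/-- Convolution powers `f^{*k}` (with `f^{*0} = ε`). -/
noncomputable def convPowW [Zero A] (f : Sentence A → ℂ) : ℕ → Sentence A → ℂ
  | 0 => epsW
  | k + 1 => convW f (convPowW f k)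

/-- Left half-shuffle powers `α^{≺k}`, with `α^{≺0} = ε` and `α^{≺k} = α ≺ α^{≺(k−1)}`. -/
noncomputable def precPowW [Zero A] (α : Sentence A → ℂ) : ℕ → Sentence A → ℂ
  | 0 => epsW
  | k + 1 => precW α (precPowW α k)

/-- Right half-shuffle powers `α^{≻k}`, with `α^{≻0} = ε` and `α^{≻k} = α^{≻(k−1)} ≻ α`. -/
noncomputable def succPowW [Zero A] (α : Sentence A → ℂ) : ℕ → Sentence A → ℂ
  | 0 => epsW
  | k + 1 => succW (succPowW α k) α

/-- The convolution exponential `exp^*(α) = Σ_{k≥0} α^{*k}/k!`. -/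
noncomputable def expStarW [Zero A] (α : Sentence A → ℂ) : Sentence A → ℂ :=
  fun s => ∑ᶠ k : ℕ, ((k.factorial : ℂ))⁻¹ * convPowW α k s

/-- The left half-shuffle exponential `E_≺(α) = Σ_{k≥0} α^{≺k}`. -/
noncomputable def ePrecW [Zero A] (α : Sentence A → ℂ) : Sentence A → ℂ :=
  fun s => ∑ᶠ k : ℕ, precPowW α k s

/-- The right half-shuffle exponential `E_≻(α) = Σ_{k≥0} α^{≻k}`. -/
noncomputable def eSuccW [Zero A] (α : Sentence A → ℂ) : Sentence A → ℂ :=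
  fun s => ∑ᶠ k : ℕ, succPowW α k s

/-- The character `Φ : T(T_+(A)) → ℂ` extending `φ`:
`Φ(w_1|⋯|w_m) = φ(w_1)⋯φ(w_m)` with `φ` applied to the internal product of each word. -/
noncomputable def charW [Monoid A] (φ : A → ℂ) : Sentence A → ℂ :=
  fun s => (s.map fun w => φ w.1.prod).prod

end Words

/-- The composition `ρ̃ ∘ ι` as a functional on `T(T_+(A))`: since
`ι(a_1⋯a_n) = Σ_{t ∈ ST(n)} t ⊗ a_1⋯a_n` (multiplicatively on bar products), its dual sends
a functional `f` on `H_S(A)` to the functional on sentences given by summing `f` over all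
ways of attaching a Schröder tree with `|w_i| + 1` leaves to each word `w_i`. -/
noncomputable def iotaDual {A : Type*} (f : PTree.DForest A → ℂ) : Sentence A → ℂ :=
  fun ws => ∑ᶠ ts ∈ {ts : List PTree |
      List.Forall₂ (fun t (w : WordNE A) =>
        PTree.IsSchroder t ∧ PTree.numLeaves t = w.1.length + 1) ts ws},
    f (ts.zip (ws.map Subtype.val))

/-!
For a fixed sentence `s`, the value `Φ^{*k}(s)` of the `k`-th convolution power is a polynomial
`P_s(k)` in `k`, and Newton's formula identifies the logarithmic series of `Φ` at `s` with the
derivative `P_s'(0)`. Put `ρ(s) = P_s'(0)`. Comparing the two sides of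
`Φ^{*(a + b)} = Φ^{*a} * Φ^{*b}` as polynomials in `a` gives the flow equation `P' = ρ * P`, whence
`ρ^{*m}(s) = P_s^{(m)}(0)`, and Taylor's formula at `1` reads `exp^*(ρ)(s) = P_s(1) = Φ(s)`. Since
`P_{s|t} = P_s P_t` and `P_s(0) = ε(s)`, the product rule shows that `ρ` is an infinitesimal
character.

On decorated trees, `Φ̃` vanishes unless the trunk of a cut is trivial or a corolla. For a tree
this leaves two cuts, the root and the set of all internal children of the root, so
`Φ̃^{*(k + 1)} - Φ̃^{*k}` at a tree is a product over its children of values of `Φ̃^{*k}`.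
Induction on the tree makes `Φ̃^{*k}(t)` a polynomial in `k`, and summing the same formula over all
Schröder trees gives `Φ̃^{*k} ∘ ι = Φ^{*k}`. Hence `log^*(Φ̃) ∘ ι` is the functional `ρ` above.
-/

/-! ### Convolution of characters on words -/

section GapConv

variable {B C R : Type*} [CommSemiring R]

/-- The sum, over all subwords `s` of a word, of `f s * g₀ l₀ * g l₁ * ⋯ * g lᵣ`, where
`l₀, …, lᵣ` are the possibly empty gaps left before, between and after the `r` letters of `s`.
A separate functional `g₀` on the first gap is what makes the recursion close up. -/
def gapConv (g : List B → R) : (List B → R) → (List B → R) → List B → R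
  | f, g₀, [] => f [] * g₀ []
  | f, g₀, a :: w =>
    gapConv g (fun s => f (a :: s)) g w * g₀ [] + gapConv g f (fun l => g₀ (a :: l)) w

/-- The convolution of two functionals on words, the second one being extended
multiplicatively to sequences of words. -/
def wordConv (f g : List B → R) (w : List B) : R := gapConv g f g w

theorem gapConv_add_left (g f f' g₀ : List B → R) (w : List B) :
    gapConv g (fun s => f s + f' s) g₀ w = gapConv g f g₀ w + gapConv g f' g₀ w := by
  induction w generalizing f f' g₀ with
  | nil => simp only [gapConv, add_mul]
  | cons a w ih => simp only [gapConv, ih]; ring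

theorem gapConv_mul_const_left (g f g₀ : List B → R) (c : R) (w : List B) :
    gapConv g (fun s => f s * c) g₀ w = gapConv g f g₀ w * c := by
  induction w generalizing f g₀ with
  | nil => simp only [gapConv, mul_right_comm]
  | cons a w ih => simp only [gapConv, ih]; ring

theorem gapConv_zero_left (g g₀ : List B → R) (w : List B) :
    gapConv g (fun _ => 0) g₀ w = 0 := by
  simpa using gapConv_mul_const_left g (fun _ => 0) g₀ 0 w

theorem gapConv_add_right (g f g₀ g₀' : List B → R) (w : List B) :
    gapConv g f (fun l => g₀ l + g₀' l) w = gapConv g f g₀ w + gapConv g f g₀' w := by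
  induction w generalizing f g₀ g₀' with
  | nil => simp only [gapConv, mul_add]
  | cons a w ih => simp only [gapConv, ih]; ring

theorem gapConv_mul_const_right (g f g₀ : List B → R) (c : R) (w : List B) :
    gapConv g f (fun l => g₀ l * c) w = gapConv g f g₀ w * c := by
  induction w generalizing f g₀ with
  | nil => simp only [gapConv, mul_assoc]
  | cons a w ih => simp only [gapConv, ih]; ring

theorem gapConv_map (e : C → B) (g f g₀ : List B → R) (w : List C) :
    gapConv g f g₀ (w.map e) =
      gapConv (fun l => g (l.map e)) (fun s => f (s.map e)) (fun l => g₀ (l.map e)) w := by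
  induction w generalizing f g₀ with
  | nil => rfl
  | cons a w ih => simp only [List.map_cons, gapConv, ih, List.map_nil]

theorem gapConv_assoc (f g h g₀ h₀ : List B → R) (w : List B) :
    gapConv h (gapConv g f g₀) h₀ w = gapConv (wordConv g h) f (gapConv h g₀ h₀) w := by
  induction w generalizing f g₀ h₀ with
  | nil => simp only [gapConv, mul_assoc]
  | cons a w ih =>
    simp only [gapConv, gapConv_add_left, gapConv_add_right, gapConv_mul_const_left,
      gapConv_mul_const_right, ih, add_mul, add_assoc]
    simp only [mul_assoc]
    rfl

theorem wordConv_assoc (f g h : List B → R) (w : List B) :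
    wordConv (wordConv f g) h w = wordConv f (wordConv g h) w :=
  gapConv_assoc f g h g h w

theorem wordConv_unit_left {u : List B → R} (hu_nil : u [] = 1) (hu : ∀ l, l ≠ [] → u l = 0)
    (g : List B → R) (w : List B) : wordConv u g w = g w := by
  suffices ∀ g₀ : List B → R, gapConv g u g₀ w = g₀ w from this g
  intro g₀
  induction w generalizing g₀ with
  | nil => simp only [gapConv, hu_nil, one_mul]
  | cons a w ih =>
    simp only [gapConv, hu _ (List.cons_ne_nil _ _), gapConv_zero_left, ih, zero_mul, zero_add]

theorem wordConv_unit_right {u : List B → R} (hu_nil : u [] = 1)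
    (hu : ∀ l, l ≠ [] → u l = 0) (f : List B → R) (w : List B) : wordConv f u w = f w := by
  have gapConv_zero (f : List B → R) (w : List B) : gapConv u f (fun _ => 0) w = 0 := by
    simpa using gapConv_mul_const_right u f (fun _ => 0) 0 w
  induction w generalizing f with
  | nil => simp only [wordConv, gapConv, hu_nil, mul_one]
  | cons a w ih =>
    simp only [wordConv] at ih ⊢
    simp only [gapConv, hu_nil, hu _ (List.cons_ne_nil _ _), gapConv_zero, ih, mul_one, add_zero]

theorem gapConv_eq_sum_first_gap (g f g₀ : List B → R) (w : List B) :
    gapConv g f g₀ w = f [] * g₀ w + ∑ i : Fin w.length,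
      g₀ (w.take i) * wordConv (fun s => f (w[i] :: s)) g (w.drop (i + 1)) := by
  induction w generalizing g₀ with
  | nil => simp [gapConv]
  | cons a w ih =>
    rw [gapConv, ih (fun l => g₀ (a :: l)), add_left_comm, mul_comm _ (g₀ [])]
    exact congrArg (f [] * g₀ (a :: w) + ·) (Fin.sum_univ_succ (fun i : Fin (w.length + 1) =>
      g₀ ((a :: w).take i) * wordConv (fun s => f ((a :: w)[i] :: s)) g (w.drop i))).symm

end GapConv

section SplitSum

variable {B C M : Type*} [AddCommMonoid M]

/-- Sum of `F s c` over all the ways of splitting a word into a subword `s` and its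
complement `c`. -/
def splitSum : (List B → List B → M) → List B → M
  | F, [] => F [] []
  | F, a :: w => splitSum (fun s c => F (a :: s) c) w + splitSum (fun s c => F s (a :: c)) w

theorem splitSum_map (e : C → B) (F : List B → List B → M) (w : List C) :
    splitSum F (w.map e) = splitSum (fun s c => F (s.map e) (c.map e)) w := by
  induction w generalizing F with
  | nil => rfl
  | cons a w ih => simp only [splitSum, List.map_cons, ih]

theorem splitSum_congr {F G : List B → List B → M} {w : List B}
    (h : ∀ s c, c ⊆ w → F s c = G s c) : splitSum F w = splitSum G w := by
  induction w generalizing F G with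
  | nil => exact h [] [] (List.Subset.refl [])
  | cons a w ih =>
    exact congrArg₂ (· + ·) (ih fun s c hc => h _ c (List.subset_cons_of_subset a hc))
      (ih fun s c hc => h s _ (List.cons_subset_cons a hc))

theorem sort_eq_filter_finRange {n : ℕ} (S : Finset (Fin n)) :
    S.sort (· ≤ ·) = (List.finRange n).filter (fun i => decide (i ∈ S)) := by
  refine List.Perm.eq_of_pairwise (le := (· ≤ ·)) (fun a b _ _ => le_antisymm)
    (Finset.pairwise_sort S _) ((List.pairwise_le_finRange n).filter _) ?_
  refine (List.perm_ext_iff_of_nodup (Finset.sort_nodup S _)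
    ((List.nodup_finRange n).filter _)).2 ?_
  simp

theorem sum_finset_fin_succ {n : ℕ} (F : Finset (Fin (n + 1)) → M) :
    ∑ S, F S = ∑ S : Finset (Fin n), F (insert 0 (S.map (Fin.succEmb n))) +
      ∑ S : Finset (Fin n), F (S.map (Fin.succEmb n)) := by
  have univ_eq : (Finset.univ : Finset (Fin (n + 1))) =
      insert 0 (Finset.univ.map (Fin.succEmb n)) := by
    ext i
    cases i using Fin.cases <;> simp
  have powerset_eq : (Finset.univ.map (Fin.succEmb n)).powerset =
      (Finset.univ : Finset (Finset (Fin n))).map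
        ⟨fun S => S.map (Fin.succEmb n), Finset.map_injective _⟩ := by
    ext S
    simp only [Finset.mem_powerset, Finset.mem_map, Finset.mem_univ, true_and,
      Function.Embedding.coeFn_mk, Finset.subset_map_iff]
    simp [eq_comm]
  rw [← Finset.powerset_univ, univ_eq, Finset.sum_powerset_insert (by simp), powerset_eq,
    add_comm]
  simp only [Finset.sum_map, Function.Embedding.coeFn_mk]

theorem sum_finset_fin_eq_splitSum (n : ℕ) (F : List (Fin n) → List (Fin n) → M) :
    ∑ S : Finset (Fin n), F (S.sort (· ≤ ·)) ((Finset.univ \ S).sort (· ≤ ·)) =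
      splitSum F (List.finRange n) := by
  simp only [sort_eq_filter_finRange]
  induction n with
  | zero => simp [splitSum]
  | succ n ih =>
    rw [sum_finset_fin_succ, List.finRange_succ, splitSum, splitSum_map, splitSum_map, ← ih, ← ih]
    simp [List.filter_map, Function.comp_def]

end SplitSum

section Runs

/-- The effect on the maximal runs of a list of putting a new entry in front of it. -/
def consRun (x : ℕ) : List (List ℕ) → List (List ℕ)
  | (y :: ys) :: rest => if x + 1 = y then (x :: y :: ys) :: rest else [x] :: (y :: ys) :: rest
  | _ => [[x]]

theorem natRuns_cons (x : ℕ) (xs : List ℕ) : natRuns (x :: xs) = consRun x (natRuns xs) := by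
  rw [natRuns]
  unfold consRun
  split <;> rfl

theorem exists_natRuns_cons_eq (x : ℕ) (xs : List ℕ) :
    ∃ ys rest, natRuns (x :: xs) = (x :: ys) :: rest := by
  rw [natRuns_cons, consRun.eq_def]
  split
  · split_ifs <;> simp
  · simp

variable {R : Type*} [CommSemiring R]

/-- The product of `g` over a list of runs, except that the run starting at `k` (or an empty one
if there is no such run) is evaluated by `g₀`. -/
def runsProd (g₀ g : List ℕ → R) (k : ℕ) : List (List ℕ) → R
  | (y :: ys) :: rest =>
    if k = y then g₀ (y :: ys) * (rest.map g).prod else g₀ [] * (((y :: ys) :: rest).map g).prod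
  | _ => g₀ []

theorem runsProd_natRuns_of_forall_lt (g₀ g : List ℕ → R) {k : ℕ} {xs : List ℕ}
    (h : ∀ x ∈ xs, k < x) :
    runsProd g₀ g k (natRuns xs) = g₀ [] * ((natRuns xs).map g).prod := by
  rcases xs with _ | ⟨x, xs⟩
  · simp [natRuns, runsProd]
  · obtain ⟨ys, rest, hruns⟩ := exists_natRuns_cons_eq x xs
    rw [hruns, runsProd, if_neg (h x (by simp)).ne]

theorem runsProd_natRuns_self {g : List ℕ → R} (hg : g [] = 1) (k : ℕ) (xs : List ℕ) :
    runsProd g g k (natRuns xs) = ((natRuns xs).map g).prod := by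
  rcases xs with _ | ⟨x, xs⟩
  · simp [natRuns, runsProd, hg]
  · obtain ⟨ys, rest, hruns⟩ := exists_natRuns_cons_eq x xs
    simp [hruns, runsProd, hg]

theorem runsProd_consRun (g₀ g : List ℕ → R) (k : ℕ) (runs : List (List ℕ)) :
    runsProd g₀ g k (consRun k runs) = runsProd (fun l => g₀ (k :: l)) g (k + 1) runs := by
  rcases runs with _ | ⟨_ | ⟨y, ys⟩, rest⟩
  · simp [consRun, runsProd]
  · simp [consRun, runsProd]
  · by_cases hy : k + 1 = y <;> simp [consRun, runsProd, hy]

theorem splitSum_runsProd_natRuns (f g₀ : List ℕ → R) {g : List ℕ → R} (hg : g [] = 1)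
    (n k : ℕ) :
    splitSum (fun s c => f s * runsProd g₀ g k (natRuns c)) (List.range' k n) =
      gapConv g f g₀ (List.range' k n) := by
  induction n generalizing k f g₀ with
  | zero => rfl
  | succ n ih =>
    rw [List.range'_succ, splitSum, gapConv]
    congr 1
    · rw [← gapConv_mul_const_left, ← ih _ _ (k + 1)]
      refine splitSum_congr fun s c hc => ?_
      have hlt : ∀ x ∈ c, k < x := fun x hx => (List.mem_range'_1.1 (hc hx)).1
      rw [runsProd_natRuns_of_forall_lt g₀ g hlt, runsProd_natRuns_self hg, mul_assoc]
    · simp only [natRuns_cons, runsProd_consRun]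
      exact ih _ _ (k + 1)

theorem splitSum_natRuns (f : List ℕ → R) {g : List ℕ → R} (hg : g [] = 1) (n k : ℕ) :
    splitSum (fun s c => f s * ((natRuns c).map g).prod) (List.range' k n) =
      wordConv f g (List.range' k n) := by
  rw [wordConv, ← splitSum_runsProd_natRuns f g hg]
  simp only [runsProd_natRuns_self hg]

end Runs

section Sentences

variable {A : Type*}

/-- The letters of a word. Using this function in place of `Subtype.val` keeps the lists it
is mapped over typed as sentences, since `WordNE` is not reducible. -/
def WordNE.letters (w : WordNE A) : List A := w.1

theorem WordNE.letters_injective : Function.Injective (WordNE.letters : WordNE A → List A) :=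
  fun _ _ h => Subtype.ext h

theorem WordNE.letters_ne_nil (w : WordNE A) : w.letters ≠ [] := w.2

theorem WordNE.exists_letters_eq {l : List A} (hl : l ≠ []) : ∃ w : WordNE A, w.letters = l :=
  ⟨⟨l, hl⟩, rfl⟩

theorem map_letters_mkWords (ls : List (List A)) :
    (mkWords ls).map WordNE.letters = ls.filter fun l => decide (l ≠ []) :=
  List.map_map.trans (List.attach_map_subtype_val _)

theorem mkWords_eq_of_map_letters {ls : List (List A)} {s : Sentence A}
    (h : s.map WordNE.letters = ls.filter fun l => decide (l ≠ [])) : mkWords ls = s :=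
  List.map_injective_iff.2 WordNE.letters_injective ((map_letters_mkWords ls).trans h.symm)

/-- The functional on words, possibly empty, underlying a functional on sentences. -/
noncomputable def onWord (f : Sentence A → ℂ) (l : List A) : ℂ := f (mkWords [l])

theorem onWord_nil (f : Sentence A → ℂ) : onWord f [] = f [] := by
  rw [onWord, mkWords_eq_of_map_letters (s := []) (by simp)]

theorem onWord_letters (f : Sentence A → ℂ) (w : WordNE A) : onWord f w.letters = f [w] := by
  rw [onWord, mkWords_eq_of_map_letters (s := [w])]
  simp [w.letters_ne_nil]

theorem IsCharW.apply_eq_prod {f : Sentence A → ℂ} (hf : IsCharW f) (s : Sentence A) :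
    f s = (s.map fun w => onWord f w.letters).prod := by
  induction s with
  | nil => exact hf.1
  | cons w s ih =>
    rw [List.map_cons, List.prod_cons, ← ih, onWord_letters, ← hf.2, List.singleton_append]

theorem IsCharW.apply_mkWords {f : Sentence A → ℂ} (hf : IsCharW f) (ls : List (List A)) :
    f (mkWords ls) = (ls.map (onWord f)).prod := by
  have map_onWord_letters (s : Sentence A) :
      s.map (fun w => onWord f w.letters) = (s.map WordNE.letters).map (onWord f) := by
    simp only [List.map_map, Function.comp_def]
  rw [hf.apply_eq_prod, map_onWord_letters, map_letters_mkWords]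
  induction ls with
  | nil => rfl
  | cons l ls ih =>
    by_cases hl : l = []
    · simpa [hl, onWord_nil, hf.1] using ih
    · simp only [hl, List.filter_cons, ne_eq, not_false_eq_true, decide_true, if_true,
        List.map_cons, List.prod_cons] at ih ⊢
      rw [ih]

theorem IsCharW.ext {f g : Sentence A → ℂ} (hf : IsCharW f) (hg : IsCharW g)
    (h : onWord f = onWord g) : f = g := by
  funext s
  rw [hf.apply_eq_prod, hg.apply_eq_prod, h]

theorem isCharW_epsW : IsCharW (epsW : Sentence A → ℂ) := by
  refine ⟨if_pos rfl, fun s t => ?_⟩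
  rcases s with _ | ⟨w, s⟩ <;> simp [epsW]

theorem isCharW_charW [Monoid A] (φ : A → ℂ) : IsCharW (charW φ) :=
  ⟨rfl, fun s t => by simp [charW]⟩

theorem onWord_epsW_nil : onWord (epsW : Sentence A → ℂ) [] = 1 := by
  rw [onWord_nil, isCharW_epsW.1]

theorem onWord_epsW_of_ne_nil {l : List A} (hl : l ≠ []) : onWord epsW l = 0 := by
  obtain ⟨w, rfl⟩ := WordNE.exists_letters_eq hl
  rw [onWord_letters]
  simp [epsW]

theorem onWord_charW [Monoid A] (φ : A → ℂ) {l : List A} (hl : l ≠ []) :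
    onWord (charW φ) l = φ l.prod := by
  obtain ⟨w, rfl⟩ := WordNE.exists_letters_eq hl
  rw [onWord_letters]
  exact List.prod_singleton

variable [Zero A]

theorem sum_wordCut {f g : Sentence A → ℂ} (hg : IsCharW g) (w : WordNE A) :
    ∑ S : Finset (Fin w.1.length), f (wordCut w S).1 * g (wordCut w S).2 =
      wordConv (onWord f) (onWord g) w.letters := by
  let letter (i : ℕ) : A := w.1.getD i 0
  have map_letter_range' : (List.range' 0 w.1.length).map letter = w.letters := by
    rw [← List.range_eq_range']
    apply List.ext_getElem <;> simp +contextual [letter, WordNE.letters]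
  have map_get (s : List (Fin w.1.length)) : s.map w.1.get = (s.map Fin.val).map letter := by
    simp [letter]
  have map_val_finRange : (List.finRange w.1.length).map Fin.val = List.range' 0 w.1.length := by
    simp [← List.range_eq_range']
  calc ∑ S : Finset (Fin w.1.length), f (wordCut w S).1 * g (wordCut w S).2
    _ = splitSum (fun s c => onWord f ((s.map Fin.val).map letter) *
          ((natRuns (c.map Fin.val)).map fun r => onWord g (r.map letter)).prod)
          (List.finRange w.1.length) := by
        rw [← sum_finset_fin_eq_splitSum]
        refine Finset.sum_congr rfl fun S _ => ?_
        rw [wordCut, ← map_get, hg.apply_mkWords, List.map_map]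
        rfl
    _ = wordConv (fun s => onWord f (s.map letter)) (fun l => onWord g (l.map letter))
          (List.range' 0 w.1.length) := by
        rw [← splitSum_natRuns _ (by simp [onWord_nil, hg.1]), ← map_val_finRange, splitSum_map]
    _ = wordConv (onWord f) (onWord g) w.letters := by
        conv_rhs => rw [← map_letter_range', wordConv, gapConv_map]
        rfl

theorem convW_cons {f g : Sentence A → ℂ} (hf : IsCharW f) (hg : IsCharW g)
    (w : WordNE A) (s : Sentence A) :
    convW f g (w :: s) = wordConv (onWord f) (onWord g) w.letters * convW f g s := by
  rw [← sum_wordCut hg, convW, sentenceCuts, List.map_flatMap, List.flatMap, List.sum_flatten,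
    List.map_map, convW, Finset.sum_mul, ← Finset.sum_map_toList]
  congr! 3 with S
  simp only [Function.comp_def, List.map_map, hf.2, hg.2, ← List.sum_map_mul_left,
    mul_mul_mul_comm]

theorem isCharW_convW {f g : Sentence A → ℂ} (hf : IsCharW f) (hg : IsCharW g) :
    IsCharW (convW f g) := by
  have convW_nil : convW f g [] = 1 := by simp [convW, sentenceCuts, hf.1, hg.1]
  refine ⟨convW_nil, fun s t => ?_⟩
  induction s with
  | nil => rw [List.nil_append, convW_nil, one_mul]
  | cons w s ih => rw [List.cons_append, convW_cons hf hg, convW_cons hf hg, ih, mul_assoc]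

theorem onWord_convW {f g : Sentence A → ℂ} (hf : IsCharW f) (hg : IsCharW g) :
    onWord (convW f g) = wordConv (onWord f) (onWord g) := by
  funext l
  by_cases hl : l = []
  · rw [hl, onWord_nil, (isCharW_convW hf hg).1, wordConv, gapConv, onWord_nil, onWord_nil, hf.1,
      hg.1, mul_one]
  · obtain ⟨w, rfl⟩ := WordNE.exists_letters_eq hl
    rw [onWord_letters, convW_cons hf hg, (isCharW_convW hf hg).1, mul_one]

theorem convW_assoc {f g h : Sentence A → ℂ} (hf : IsCharW f) (hg : IsCharW g) (hh : IsCharW h) :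
    convW (convW f g) h = convW f (convW g h) := by
  have hfg := isCharW_convW hf hg
  have hgh := isCharW_convW hg hh
  refine (isCharW_convW hfg hh).ext (isCharW_convW hf hgh) ?_
  funext w
  rw [onWord_convW hfg hh, onWord_convW hf hg, onWord_convW hf hgh, onWord_convW hg hh,
    wordConv_assoc]

theorem epsW_convW {f : Sentence A → ℂ} (hf : IsCharW f) : convW epsW f = f := by
  refine (isCharW_convW isCharW_epsW hf).ext hf ?_
  funext w
  rw [onWord_convW isCharW_epsW hf, wordConv_unit_left onWord_epsW_nil
    fun _ => onWord_epsW_of_ne_nil]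

theorem convW_epsW {f : Sentence A → ℂ} (hf : IsCharW f) : convW f epsW = f := by
  refine (isCharW_convW hf isCharW_epsW).ext hf ?_
  funext w
  rw [onWord_convW hf isCharW_epsW, wordConv_unit_right onWord_epsW_nil
    fun _ => onWord_epsW_of_ne_nil]

theorem isCharW_convPowW {f : Sentence A → ℂ} (hf : IsCharW f) (k : ℕ) :
    IsCharW (convPowW f k) := by
  induction k with
  | zero => exact isCharW_epsW
  | succ k ih => exact isCharW_convW hf ih

theorem convPowW_add {f : Sentence A → ℂ} (hf : IsCharW f) (a b : ℕ) :
    convPowW f (a + b) = convW (convPowW f a) (convPowW f b) := by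
  induction a with
  | zero => rw [zero_add, convPowW, epsW_convW (isCharW_convPowW hf b)]
  | succ a ih =>
    rw [Nat.succ_add, convPowW, convPowW, ih,
      convW_assoc hf (isCharW_convPowW hf a) (isCharW_convPowW hf b)]

theorem convPowW_one {f : Sentence A → ℂ} (hf : IsCharW f) : convPowW f 1 = f :=
  convW_epsW hf

end Sentences
/-! ### Polynomial convolution powers -/

section NewtonSeries

open Polynomial

variable {K : Type*} [Field K]

/-- The Newton series `∑ v j * (X choose j)`, truncated at `j < N`: the polynomial with binomial
coordinates `v 0, …, v (N - 1)`. -/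
noncomputable def newtonPoly (v : ℕ → K) (N : ℕ) : K[X] :=
  ∑ j ∈ Finset.range N, C (v j / (j.factorial : K)) * descPochhammer K j

theorem derivative_descPochhammer_eval_zero (j : ℕ) :
    (derivative (descPochhammer K (j + 1))).eval 0 = (-1) ^ j * (j.factorial : K) := by
  induction j with
  | zero => simp
  | succ j ih =>
    rw [descPochhammer_succ_right, derivative_mul, eval_add, eval_mul, ih, eval_mul,
      descPochhammer_ne_zero_eval_zero K (Nat.succ_ne_zero j), Nat.factorial_succ]
    simp
    ring

theorem fwdDiff_iter_comp_natCast (f : K → K) (j n : ℕ) :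
    (fwdDiff 1)^[j] (fun k : ℕ => f k) n = (fwdDiff 1)^[j] f n := by
  induction j generalizing f with
  | zero => rfl
  | succ j ih =>
    have fwdDiff_cast : fwdDiff 1 (fun k : ℕ => f k) = fun k : ℕ => fwdDiff 1 f k := by
      funext k
      rw [fwdDiff, fwdDiff, Nat.cast_add, Nat.cast_one]
    rw [Function.iterate_succ_apply, Function.iterate_succ_apply, fwdDiff_cast, ih]

theorem eq_fwdDiff_iter_of_eq_sum_choose {u v : ℕ → K}
    (h : ∀ k, u k = ∑ j ∈ Finset.range (k + 1), (k.choose j : K) * v j) (j : ℕ) :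
    v j = (fwdDiff 1)^[j] u 0 := by
  induction j using Nat.strong_induction_on with
  | _ j ih =>
    have newton := shift_eq_sum_fwdDiff_iter 1 u j 0
    have coords_lt : ∀ i ∈ Finset.range j,
        (j.choose i : K) * v i = j.choose i • (fwdDiff 1)^[i] u 0 :=
      fun i hi => by rw [ih i (Finset.mem_range.1 hi), nsmul_eq_mul]
    rw [smul_eq_mul, mul_one, zero_add, h j, Finset.sum_range_succ, Finset.sum_range_succ,
      Finset.sum_congr rfl coords_lt] at newton
    simpa using newton

variable [CharZero K]

theorem polynomial_eq_of_eval_natCast_eq {P Q : K[X]}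
    (h : ∀ k : ℕ, P.eval (k : K) = Q.eval (k : K)) : P = Q :=
  Polynomial.eq_of_infinite_eval_eq P Q
    ((Set.infinite_range_of_injective Nat.cast_injective).mono
      (by rintro _ ⟨k, rfl⟩; exact h k))

theorem eval_natCast_newtonPoly (v : ℕ → K) (N k : ℕ) :
    (newtonPoly v N).eval (k : K) = ∑ j ∈ Finset.range N, (k.choose j : K) * v j := by
  rw [newtonPoly, eval_finsetSum]
  refine Finset.sum_congr rfl fun j _ => ?_
  rw [eval_mul, eval_C, Nat.cast_choose_eq_descPochhammer_div, div_mul_comm]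

theorem eval_natCast_newtonPoly_of_eventually_zero {v : ℕ → K} {N : ℕ}
    (hv : ∀ j ≥ N, v j = 0) (k : ℕ) :
    (newtonPoly v N).eval (k : K) = ∑ j ∈ Finset.range (k + 1), (k.choose j : K) * v j := by
  rw [eval_natCast_newtonPoly,
    ← Finset.eventually_constant_sum (fun j hj => by rw [hv j hj, mul_zero])
      (le_max_left N (k + 1)),
    Finset.eventually_constant_sum (fun j hj => by rw [Nat.choose_eq_zero_of_lt hj]; simp)
      (le_max_right N (k + 1))]

theorem derivative_newtonPoly_eval_zero (v : ℕ → K) (N : ℕ) :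
    (derivative (newtonPoly v N)).eval 0 =
      ∑ j ∈ Finset.range N, (-1 : K) ^ (j + 1) / (j : K) * v j := by
  rw [newtonPoly, derivative_sum, eval_finsetSum]
  refine Finset.sum_congr rfl fun j _ => ?_
  rw [derivative_C_mul, eval_mul, eval_C]
  rcases j with _ | j
  · simp
  · have hj : (j : K) + 1 ≠ 0 := Nat.cast_add_one_ne_zero j
    have hfact : (j.factorial : K) ≠ 0 := Nat.cast_ne_zero.2 j.factorial_ne_zero
    rw [derivative_descPochhammer_eval_zero, Nat.factorial_succ]
    push_cast
    field_simp
    ring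

theorem exists_polynomial_of_fwdDiff {u : ℕ → K} {Q : K[X]}
    (h : ∀ k : ℕ, u (k + 1) = u k + Q.eval (k : K)) :
    ∃ P : K[X], ∀ k : ℕ, u k = P.eval (k : K) := by
  have fwdDiff_u : fwdDiff 1 u = fun k : ℕ => Q.eval (k : K) := by
    funext k
    rw [fwdDiff, h, add_sub_cancel_left]
  have coords_zero : ∀ j ≥ Q.natDegree + 2, (fwdDiff 1)^[j] u 0 = 0 := by
    rintro (_ | j) hj
    · omega
    · rw [Function.iterate_succ_apply, fwdDiff_u, fwdDiff_iter_comp_natCast (Q.eval ·),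
        fwdDiff_iter_eq_zero_of_degree_lt (by omega), Pi.zero_apply]
  refine ⟨newtonPoly (fun j => (fwdDiff 1)^[j] u 0) (Q.natDegree + 2), fun k => ?_⟩
  rw [eval_natCast_newtonPoly_of_eventually_zero coords_zero]
  simpa using shift_eq_sum_fwdDiff_iter 1 u k 0

theorem logSeries_eq_derivative_eval_zero {v : ℕ → K} {P : K[X]}
    (h : ∀ k : ℕ, P.eval (k : K) = ∑ j ∈ Finset.range (k + 1), (k.choose j : K) * v j) :
    ∑ᶠ j ∈ Set.Ici (1 : ℕ), (-1 : K) ^ (j + 1) / (j : K) * v j = (derivative P).eval 0 := by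
  have coords_zero : ∀ j ≥ P.natDegree + 1, v j = 0 := fun j hj => by
    rw [eq_fwdDiff_iter_of_eq_sum_choose h, fwdDiff_iter_comp_natCast (P.eval ·),
      fwdDiff_iter_eq_zero_of_degree_lt hj, Pi.zero_apply]
  have newton_eq : P = newtonPoly v (P.natDegree + 1) :=
    polynomial_eq_of_eval_natCast_eq fun k => by
      rw [h, eval_natCast_newtonPoly_of_eventually_zero coords_zero]
  rw [congrArg derivative newton_eq, derivative_newtonPoly_eval_zero]
  refine finsum_mem_eq_sum_of_inter_support_eq _ (Set.ext fun j => and_congr_left fun hj => ?_)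
  have hj_pos : 1 ≤ j := by
    rw [Nat.one_le_iff_ne_zero]
    rintro rfl
    simp at hj
  have hj_lt : j < P.natDegree + 1 := by
    by_contra! hle
    simp [coords_zero j hle] at hj
  simp [hj_pos, hj_lt]

end NewtonSeries

section PowerFlow

open Polynomial

theorem iterate_derivative_listSum {R : Type*} [Semiring R] (m : ℕ) (L : List R[X]) :
    derivative^[m] L.sum = (L.map derivative^[m]).sum := by
  rw [← Module.End.coe_pow, map_list_sum]

theorem finsum_iterate_derivative_eval_zero_eq_eval_one {K : Type*} [Field K] [CharZero K]
    (P : K[X]) :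
    ∑ᶠ m : ℕ, (m.factorial : K)⁻¹ * (derivative^[m] P).eval 0 = P.eval 1 := by
  have taylor_coeff (m : ℕ) :
      (m.factorial : K)⁻¹ * (derivative^[m] P).eval 0 = P.coeff m := by
    rw [← coeff_zero_eq_eval_zero, coeff_iterate_derivative, zero_add, Nat.descFactorial_self,
      nsmul_eq_mul, inv_mul_cancel_left₀ (Nat.cast_ne_zero.2 m.factorial_ne_zero)]
  simp only [taylor_coeff]
  rw [finsum_eq_sum_of_support_subset (s := P.support) _ (fun m hm => by simpa using hm),
    eval_eq_sum, Polynomial.sum]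
  simp only [one_pow, mul_one]

variable {A : Type*} [Zero A] {f ρ : Sentence A → ℂ} {P : Sentence A → ℂ[X]}

theorem eval_zero_of_eval_eq_convPowW (hP : ∀ s (k : ℕ), (P s).eval (k : ℂ) = convPowW f k s)
    (s : Sentence A) : (P s).eval 0 = epsW s := by
  simpa only [Nat.cast_zero, convPowW] using hP s 0

theorem eval_one_of_eval_eq_convPowW (hf : IsCharW f)
    (hP : ∀ s (k : ℕ), (P s).eval (k : ℂ) = convPowW f k s) (s : Sentence A) :
    (P s).eval 1 = f s := by
  simpa only [convPowW_one hf, Nat.cast_one] using hP s 1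

theorem polynomial_append_of_eval_eq_convPowW (hf : IsCharW f)
    (hP : ∀ s (k : ℕ), (P s).eval (k : ℂ) = convPowW f k s) (s t : Sentence A) :
    P (s ++ t) = P s * P t :=
  polynomial_eq_of_eval_natCast_eq fun k => by
    rw [eval_mul, hP, hP, hP, (isCharW_convPowW hf k).2]

theorem comp_X_add_natCast_of_eval_eq_convPowW (hf : IsCharW f)
    (hP : ∀ s (k : ℕ), (P s).eval (k : ℂ) = convPowW f k s) (s : Sentence A) (b : ℕ) :
    (P s).comp (X + C (b : ℂ)) =
      ((sentenceCuts s).map fun pr => P pr.1 * C ((P pr.2).eval (b : ℂ))).sum :=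
  polynomial_eq_of_eval_natCast_eq fun a => by
    simp only [eval_comp, eval_add, eval_X, eval_C, ← Nat.cast_add, hP, convPowW_add hf,
      convW, eval_listSum, List.map_map, Function.comp_def, eval_mul]

/-- Differentiating `P(a + b) = P(a) * P(b)` in `a` at `a = 0`. -/
theorem derivative_flow_of_eval_eq_convPowW (hf : IsCharW f)
    (hP : ∀ s (k : ℕ), (P s).eval (k : ℂ) = convPowW f k s) (s : Sentence A) :
    derivative (P s) =
      ((sentenceCuts s).map fun pr => C ((derivative (P pr.1)).eval 0) * P pr.2).sum :=
  polynomial_eq_of_eval_natCast_eq fun b => by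
    have derivative_comp_eq := congrArg (fun Q => (derivative Q).eval 0)
      (comp_X_add_natCast_of_eval_eq_convPowW hf hP s b)
    simp only [derivative_comp, derivative_add, derivative_X, derivative_C, add_zero, one_mul,
      eval_comp, eval_add, eval_X, eval_C, zero_add, map_list_sum, List.map_map,
      eval_listSum, Function.comp_def, derivative_mul, mul_zero, eval_mul] at derivative_comp_eq
    simpa only [eval_listSum, List.map_map, Function.comp_def, eval_mul, eval_C]
      using derivative_comp_eq

theorem convPowW_eq_iterate_derivative_eval_zero (hf : IsCharW f)
    (hP : ∀ s (k : ℕ), (P s).eval (k : ℂ) = convPowW f k s)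
    (hρ : ∀ s, ρ s = (derivative (P s)).eval 0) (m : ℕ) (s : Sentence A) :
    convPowW ρ m s = (derivative^[m] (P s)).eval 0 := by
  induction m generalizing s with
  | zero => exact (eval_zero_of_eval_eq_convPowW hP s).symm
  | succ m ih =>
    rw [Function.iterate_succ_apply, derivative_flow_of_eval_eq_convPowW hf hP, convPowW, convW]
    simp only [ih, hρ, iterate_derivative_listSum, eval_listSum, List.map_map, Function.comp_def,
      iterate_derivative_C_mul, eval_mul, eval_C]

theorem isInfCharW_of_eval_eq_convPowW (hf : IsCharW f)
    (hP : ∀ s (k : ℕ), (P s).eval (k : ℂ) = convPowW f k s)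
    (hρ : ∀ s, ρ s = (derivative (P s)).eval 0) : IsInfCharW ρ := by
  constructor
  · have P_nil : P [] = 1 := polynomial_eq_of_eval_natCast_eq fun k => by
      rw [hP, (isCharW_convPowW hf k).1, eval_one]
    rw [hρ, P_nil, derivative_one, eval_zero]
  · intro s t hs ht
    rw [hρ, polynomial_append_of_eval_eq_convPowW hf hP, derivative_mul, eval_add, eval_mul,
      eval_mul, eval_zero_of_eval_eq_convPowW hP, eval_zero_of_eval_eq_convPowW hP, epsW,
      if_neg ht, epsW, if_neg hs, mul_zero, zero_mul, add_zero]

theorem eq_expStarW_of_eval_eq_convPowW (hf : IsCharW f)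
    (hP : ∀ s (k : ℕ), (P s).eval (k : ℂ) = convPowW f k s)
    (hρ : ∀ s, ρ s = (derivative (P s)).eval 0) : f = expStarW ρ := by
  funext s
  simp only [expStarW, convPowW_eq_iterate_derivative_eval_zero hf hP hρ,
    finsum_iterate_derivative_eval_zero_eq_eval_one, eval_one_of_eval_eq_convPowW hf hP]

end PowerFlow

namespace PTree

/-! ### Leaves -/

section Leaves

theorem induction_on_children {P : PTree → Prop}
    (h : ∀ cs, (∀ c ∈ cs, P c) → P (node cs)) : ∀ t, P t
  | node cs => h cs fun c _ => induction_on_children h c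
termination_by t => t

theorem exists_eq_node_of_ne_leaf {t : PTree} (h : t ≠ leaf) : ∃ cs, t = node cs ∧ cs ≠ [] := by
  cases t with
  | node cs => exact ⟨cs, rfl, fun cs_nil => h (congrArg node cs_nil)⟩

theorem node_ne_leaf {cs : List PTree} (hcs : 2 ≤ cs.length) : node cs ≠ leaf := fun h => by
  rw [node.inj h] at hcs
  exact Nat.not_succ_le_zero 1 hcs

theorem subtreeAt_nil (t : PTree) : subtreeAt [] t = some t := by
  cases t
  rfl

theorem subtreeAt_cons (i : ℕ) (p : List ℕ) (cs : List PTree) :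
    subtreeAt (i :: p) (node cs) = (cs[i]?).bind (subtreeAt p) := rfl

theorem isLeafAt_nil {t : PTree} : IsLeafAt t [] ↔ t = leaf := by
  simp [IsLeafAt, subtreeAt_nil]

theorem isLeafAt_cons {cs : List PTree} {i : ℕ} {p : List ℕ} :
    IsLeafAt (node cs) (i :: p) ↔ ∃ h : i < cs.length, IsLeafAt cs[i] p := by
  rw [IsLeafAt, subtreeAt_cons]
  by_cases h : i < cs.length <;> simp [h, IsLeafAt]

theorem setOf_isLeafAt_leaf : {p | IsLeafAt leaf p} = {[]} := by
  ext (_ | ⟨i, p⟩)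
  · simp [isLeafAt_nil]
  · simp [isLeafAt_cons]

theorem finite_setOf_isLeafAt (t : PTree) : {p | IsLeafAt t p}.Finite := by
  induction t using induction_on_children with
  | h cs ih =>
    refine ((Set.finite_iUnion fun i : Fin cs.length =>
      (ih cs[i] (List.getElem_mem i.2)).image (List.cons i.val)).insert []).subset ?_
    rintro (_ | ⟨i, p⟩) hp
    · exact Set.mem_insert _ _
    · obtain ⟨hi, hp⟩ := isLeafAt_cons.1 hp
      exact Or.inr (Set.mem_iUnion.2 ⟨⟨i, hi⟩, p, hp, rfl⟩)

/-- The leaves of `node cs` lying in the first `i` children of the root. -/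
def leavesInFirst (cs : List PTree) (i : ℕ) : Set (List ℕ) :=
  {p | ∃ j q, p = j :: q ∧ j < i ∧ IsLeafAt (node cs) p}

theorem leavesInFirst_zero (cs : List PTree) : leavesInFirst cs 0 = ∅ := by
  ext p
  simp [leavesInFirst]

theorem leavesInFirst_succ {cs : List PTree} {i : ℕ} (hi : i < cs.length) :
    leavesInFirst cs (i + 1) = leavesInFirst cs i ∪ List.cons i '' {p | IsLeafAt cs[i] p} := by
  ext p
  constructor
  · rintro ⟨j, q, rfl, hj, hp⟩
    rcases Nat.lt_succ_iff_lt_or_eq.1 hj with hj | rfl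
    · exact Or.inl ⟨j, q, rfl, hj, hp⟩
    · exact Or.inr ⟨q, (isLeafAt_cons.1 hp).2, rfl⟩
  · rintro (⟨j, q, rfl, hj, hp⟩ | ⟨q, hq, rfl⟩)
    · exact ⟨j, q, rfl, hj.trans (Nat.lt_succ_self i), hp⟩
    · exact ⟨i, q, rfl, Nat.lt_succ_self i, isLeafAt_cons.2 ⟨hi, hq⟩⟩

theorem setOf_isLeafAt_node {cs : List PTree} (hcs : cs ≠ []) :
    {p | IsLeafAt (node cs) p} = leavesInFirst cs cs.length := by
  refine Set.Subset.antisymm ?_ fun p ⟨_, _, _, _, hp⟩ => hp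
  rintro (_ | ⟨j, q⟩) hp
  · exact absurd (node.inj (isLeafAt_nil.1 hp)) hcs
  · exact ⟨j, q, rfl, (isLeafAt_cons.1 hp).1, hp⟩

/-- The number of leaves in the first `i` trees of `cs`; in `node cs` it is also the index of the
first sector of the `i`-th child. -/
noncomputable def leafOffset (cs : List PTree) (i : ℕ) : ℕ := ((cs.take i).map numLeaves).sum

theorem ncard_leavesInFirst (cs : List PTree) (i : ℕ) (hi : i ≤ cs.length) :
    (leavesInFirst cs i).ncard = leafOffset cs i := by
  induction i with
  | zero => simp [leavesInFirst_zero, leafOffset]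
  | succ i ih =>
    have disjoint : Disjoint (leavesInFirst cs i) (List.cons i '' {p | IsLeafAt cs[i] p}) := by
      rw [Set.disjoint_left]
      rintro _ ⟨j, q, rfl, hj, _⟩ ⟨q', _, hq⟩
      exact hj.ne' (List.cons.inj hq).1
    have finite_leavesInFirst : (leavesInFirst cs i).Finite :=
      (finite_setOf_isLeafAt (node cs)).subset fun p ⟨_, _, _, _, hp⟩ => hp
    rw [leavesInFirst_succ hi, Set.ncard_union_eq disjoint finite_leavesInFirst
        ((finite_setOf_isLeafAt _).image _), ih (Nat.le_of_succ_le hi),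
      Set.ncard_image_of_injective _ List.cons_injective, leafOffset, leafOffset,
      List.take_succ_eq_append_getElem hi, List.map_append, List.sum_append, List.map_singleton,
      List.sum_singleton]
    rfl

theorem numLeaves_leaf : numLeaves leaf = 1 :=
  (congrArg Set.ncard setOf_isLeafAt_leaf).trans (Set.ncard_singleton _)

theorem numLeaves_node {cs : List PTree} (hcs : cs ≠ []) :
    numLeaves (node cs) = (cs.map numLeaves).sum := by
  refine (congrArg Set.ncard (setOf_isLeafAt_node hcs)).trans ?_
  rw [ncard_leavesInFirst cs _ le_rfl, leafOffset, List.take_length]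

theorem numLeaves_pos (t : PTree) : 0 < numLeaves t := by
  induction t using induction_on_children with
  | h cs ih =>
    rcases cs with _ | ⟨c, cs⟩
    · rw [numLeaves_leaf]
      exact Nat.one_pos
    · rw [numLeaves_node (List.cons_ne_nil c cs), List.map_cons, List.sum_cons]
      exact Nat.add_pos_left (ih c List.mem_cons_self) _

theorem numSectors_add_one (t : PTree) : numSectors t + 1 = numLeaves t :=
  Nat.sub_add_cancel (numLeaves_pos t)

theorem numSectors_leaf : numSectors leaf = 0 := by
  rw [numSectors, numLeaves_leaf]

theorem numSectors_cons (c : PTree) {cs : List PTree} (hcs : cs ≠ []) :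
    numSectors (node (c :: cs)) = numSectors c + 1 + numSectors (node cs) := by
  have sectors_cs := numSectors_add_one (node cs)
  have sectors_c := numSectors_add_one c
  rw [numSectors, numLeaves_node (List.cons_ne_nil c cs), List.map_cons, List.sum_cons,
    ← numLeaves_node hcs]
  omega

theorem leafOffset_zero (cs : List PTree) : leafOffset cs 0 = 0 := rfl

theorem leafOffset_cons_succ (c : PTree) (cs : List PTree) (i : ℕ) :
    leafOffset (c :: cs) (i + 1) = numSectors c + 1 + leafOffset cs i := by
  rw [numSectors_add_one]
  rfl

theorem leavesBefore_nil (t : PTree) : leavesBefore t [] = 0 := by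
  refine (congrArg Set.ncard (Set.eq_empty_of_forall_notMem fun q hq => ?_)).trans
    (Set.ncard_empty (List ℕ))
  exact hq.2.2 List.nil_prefix

theorem leavesBefore_singleton {cs : List PTree} {i : ℕ} (hi : i < cs.length) :
    leavesBefore (node cs) [i] = leafOffset cs i := by
  rw [← ncard_leavesInFirst cs i hi.le]
  refine congrArg Set.ncard (Set.ext fun q => ⟨?_, ?_⟩)
  · rintro ⟨hleaf, hlex, -⟩
    rcases q with _ | ⟨j, q⟩
    · rw [node.inj (isLeafAt_nil.1 hleaf)] at hi
      exact absurd hi (Nat.not_lt_zero i)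
    · rcases List.cons_lex_cons_iff.1 hlex with hji | ⟨-, hnil⟩
      · exact ⟨j, q, rfl, hji, hleaf⟩
      · exact absurd hnil List.not_lex_nil
  · rintro ⟨j, q, rfl, hji, hleaf⟩
    exact ⟨hleaf, List.Lex.rel hji, fun hprefix => hji.ne' (List.cons_prefix_cons.1 hprefix).1⟩

theorem subtree!_nil (t : PTree) : subtree! t [] = t := by
  simp [subtree!, subtreeAt_nil]

theorem subtree!_singleton {cs : List PTree} {i : ℕ} (hi : i < cs.length) :
    subtree! (node cs) [i] = cs[i] := by
  simp [subtree!, subtreeAt_cons, hi, subtreeAt_nil]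

end Leaves

/-! ### Admissible cuts and trunks -/

section Cuts

theorem isInternalAt_nil {t : PTree} : IsInternalAt t [] ↔ t ≠ leaf := by
  cases t
  simp [IsInternalAt, subtreeAt_nil]

theorem not_isInternalAt_leaf (p : List ℕ) : ¬ IsInternalAt leaf p := by
  rcases p with _ | ⟨i, p⟩
  · simp [isInternalAt_nil]
  · simp [IsInternalAt, subtreeAt_cons]

theorem isInternalAt_cons {cs : List PTree} {i : ℕ} {p : List ℕ} :
    IsInternalAt (node cs) (i :: p) ↔ IsInternalAt (cs.getD i leaf) p := by
  by_cases hi : i < cs.length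
  · simp [IsInternalAt, subtreeAt_cons, hi]
  · simp only [not_lt.1 hi, List.getD_eq_default, not_isInternalAt_leaf, iff_false]
    simp [IsInternalAt, subtreeAt_cons, hi]

theorem cons_mem_verticesListAux {cs : List PTree} {i : ℕ} (hi : i < cs.length) {p : List ℕ}
    (hp : p ∈ verticesList cs[i]) (k : ℕ) : (k + i) :: p ∈ verticesListAux k cs := by
  induction cs generalizing k i with
  | nil => exact absurd hi (Nat.not_lt_zero i)
  | cons c cs ih =>
    rw [verticesListAux, List.mem_append]
    rcases i with _ | i
    · exact Or.inl (List.mem_map_of_mem hp)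
    · rw [← Nat.succ_add_eq_add_succ]
      exact Or.inr (ih (Nat.lt_of_succ_lt_succ hi) hp (k + 1))

theorem IsInternalAt.mem_verticesList {t : PTree} {p : List ℕ} (h : IsInternalAt t p) :
    p ∈ verticesList t := by
  induction p generalizing t with
  | nil =>
    cases t
    simp [verticesList]
  | cons i p ih =>
    obtain ⟨cs⟩ := t
    rw [isInternalAt_cons] at h
    have hi : i < cs.length := by
      by_contra! hi
      rw [List.getD_eq_default _ _ hi] at h
      exact not_isInternalAt_leaf p h
    rw [List.getD_eq_getElem _ _ hi] at h
    rw [verticesList]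
    exact List.mem_cons_of_mem _ (by simpa using cons_mem_verticesListAux hi (ih h) 0)

theorem mem_internalFinset {t : PTree} {v : List ℕ} : v ∈ internalFinset t ↔ IsInternalAt t v := by
  simpa [internalFinset] using IsInternalAt.mem_verticesList

theorem mem_cutsFinset {t : PTree} {c : Finset (List ℕ)} :
    c ∈ cutsFinset t ↔
      (∀ v ∈ c, IsInternalAt t v) ∧ ∀ v ∈ c, ∀ w ∈ c, v ≠ w → ¬ v <+: w := by
  simp [cutsFinset, Finset.subset_iff, mem_internalFinset]

theorem sortCut_perm (t : PTree) (c : Finset (List ℕ)) : (sortCut t c).Perm c.toList :=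
  List.mergeSort_perm _ _

theorem mem_sortCut {t : PTree} {c : Finset (List ℕ)} {v : List ℕ} : v ∈ sortCut t c ↔ v ∈ c := by
  rw [(sortCut_perm t c).mem_iff, Finset.mem_toList]

theorem sortCut_singleton (t : PTree) (v : List ℕ) : sortCut t {v} = [v] := by
  simp [sortCut]

theorem root_mem_cutsFinset {t : PTree} (ht : t ≠ leaf) : {[]} ∈ cutsFinset t := by
  simpa [mem_cutsFinset, isInternalAt_nil] using ht

theorem eq_root_of_nil_mem {t : PTree} {c : Finset (List ℕ)} (hc : c ∈ cutsFinset t)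
    (h : [] ∈ c) : c = {[]} := by
  rw [Finset.eq_singleton_iff_unique_mem]
  refine ⟨h, fun v hv => ?_⟩
  by_contra hne
  exact (mem_cutsFinset.1 hc).2 [] h v hv (Ne.symm hne) List.nil_prefix

open Classical in
/-- The cut made of all the internal children of the root of `node cs`. -/
noncomputable def childCut (cs : List PTree) : Finset (List ℕ) :=
  (Finset.univ.filter fun i : Fin cs.length => cs[i] ≠ leaf).image fun i => [i.val]

theorem mem_childCut {cs : List PTree} {v : List ℕ} :
    v ∈ childCut cs ↔ ∃ i, cs.getD i leaf ≠ leaf ∧ v = [i] := by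
  simp only [childCut, Finset.mem_image, Finset.mem_filter, Finset.mem_univ, true_and]
  constructor
  · rintro ⟨i, hi, rfl⟩
    exact ⟨i, by rwa [List.getD_eq_getElem _ _ i.2], rfl⟩
  · rintro ⟨i, hi, rfl⟩
    have hlt : i < cs.length := by
      by_contra! hle
      exact hi (List.getD_eq_default _ _ hle)
    exact ⟨⟨i, hlt⟩, by rwa [List.getD_eq_getElem _ _ hlt] at hi, rfl⟩

theorem childCut_ne_root (cs : List PTree) : childCut cs ≠ {[]} := fun h => by
  obtain ⟨_, _, nil_eq⟩ := mem_childCut.1 (h ▸ Finset.mem_singleton_self _)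
  exact List.cons_ne_nil _ _ nil_eq.symm

theorem childCut_mem_cutsFinset (cs : List PTree) : childCut cs ∈ cutsFinset (node cs) := by
  rw [mem_cutsFinset]
  constructor
  · intro v hv
    obtain ⟨i, hi, rfl⟩ := mem_childCut.1 hv
    exact isInternalAt_cons.2 (isInternalAt_nil.2 hi)
  · intro v hv w hw hne hprefix
    obtain ⟨i, _, rfl⟩ := mem_childCut.1 hv
    obtain ⟨j, _, rfl⟩ := mem_childCut.1 hw
    exact hne (hprefix.eq_of_length rfl)

theorem eq_childCut_of_subset {cs : List PTree} {c : Finset (List ℕ)}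
    (hc : c ∈ cutsFinset (node cs)) (hroot : c ≠ {[]}) (hsub : childCut cs ⊆ c) :
    c = childCut cs := by
  refine Finset.Subset.antisymm ?_ hsub
  rintro (_ | ⟨i, p⟩) hv
  · exact absurd (eq_root_of_nil_mem hc hv) hroot
  · obtain ⟨hint, hanti⟩ := mem_cutsFinset.1 hc
    have child_internal : [i] ∈ childCut cs := mem_childCut.2 ⟨i, fun hleaf =>
      not_isInternalAt_leaf p (hleaf ▸ isInternalAt_cons.1 (hint _ hv)), rfl⟩
    have cons_eq : [i] = i :: p := by
      by_contra hne
      exact hanti _ (hsub child_internal) _ hv hne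
        (List.cons_prefix_cons.2 ⟨rfl, List.nil_prefix⟩)
    rwa [← cons_eq]

theorem replaceLeaf_nil (t : PTree) : replaceLeaf [] t = leaf := by
  cases t
  rfl

theorem replaceLeaf_cons (i : ℕ) (p : List ℕ) (cs : List PTree) :
    replaceLeaf (i :: p) (node cs) = node (cs.set i (replaceLeaf p (cs.getD i leaf))) := rfl

theorem replaceLeaf_eq_leaf {t : PTree} {p : List ℕ} :
    replaceLeaf p t = leaf ↔ t = leaf ∨ p = [] := by
  obtain ⟨cs⟩ := t
  rcases p with _ | ⟨i, p⟩
  · simp [replaceLeaf_nil]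
  · simp [replaceLeaf_cons]

theorem getD_set_replaceLeaf_eq_leaf {cs : List PTree} {i j : ℕ} {p : List ℕ} :
    (cs.set i (replaceLeaf p (cs.getD i leaf))).getD j leaf = leaf ↔
      cs.getD j leaf = leaf ∨ i :: p = [j] := by
  rw [List.getD_eq_getElem?_getD, List.getElem?_set]
  by_cases hij : i = j
  · subst hij
    by_cases hi : i < cs.length
    · simp [hi, replaceLeaf_eq_leaf]
    · simp [hi]
  · simp [hij]

theorem exists_foldl_replaceLeaf_eq_node (L : List (List ℕ)) (hL : [] ∉ L) (cs : List PTree) :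
    ∃ ds, L.foldl (fun s v => replaceLeaf v s) (node cs) = node ds ∧ ds.length = cs.length ∧
      ∀ j, ds.getD j leaf = leaf ↔ cs.getD j leaf = leaf ∨ [j] ∈ L := by
  induction L generalizing cs with
  | nil => exact ⟨cs, rfl, rfl, by simp⟩
  | cons v L ih =>
    obtain ⟨nil_ne, nil_notMem⟩ := not_or.1 (List.mem_cons.not.1 hL)
    obtain ⟨i, p, rfl⟩ := List.exists_cons_of_ne_nil (Ne.symm nil_ne)
    obtain ⟨ds, hds, hlen, hleaf⟩ := ih nil_notMem (cs.set i (replaceLeaf p (cs.getD i leaf)))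
    refine ⟨ds, hds, hlen.trans List.length_set, fun j => ?_⟩
    rw [hleaf, getD_set_replaceLeaf_eq_leaf, List.mem_cons, or_assoc, eq_comm (a := [j])]

theorem exists_trunkTree_eq_node {c : Finset (List ℕ)} (hc : [] ∉ c) (cs : List PTree) :
    ∃ ds, trunkTree (node cs) c = node ds ∧ ds.length = cs.length ∧
      ∀ j, ds.getD j leaf = leaf ↔ cs.getD j leaf = leaf ∨ [j] ∈ c := by
  simpa only [mem_sortCut, trunkTree] using
    exists_foldl_replaceLeaf_eq_node (sortCut (node cs) c) (mt mem_sortCut.1 hc) cs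

theorem trunkTree_root (t : PTree) : trunkTree t {[]} = leaf := by
  simp [trunkTree, sortCut_singleton, replaceLeaf_nil]

theorem trunkTree_eq_leaf_iff {t : PTree} (ht : t ≠ leaf) {c : Finset (List ℕ)}
    (hc : c ∈ cutsFinset t) : trunkTree t c = leaf ↔ c = {[]} := by
  refine ⟨fun htrunk => eq_root_of_nil_mem hc ?_, fun hroot => hroot ▸ trunkTree_root t⟩
  by_contra hnil
  obtain ⟨cs, rfl, hcs⟩ := exists_eq_node_of_ne_leaf ht
  obtain ⟨ds, hds, hlen, -⟩ := exists_trunkTree_eq_node hnil cs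
  rw [htrunk, node.injEq] at hds
  subst hds
  exact hcs (List.length_eq_zero_iff.1 hlen.symm)

theorem isCorolla_node {cs : List PTree} :
    IsCorolla (node cs) ↔ 2 ≤ cs.length ∧ ∀ i, cs.getD i leaf = leaf := by
  constructor
  · rintro ⟨m, hm, h⟩
    obtain rfl := node.inj h
    refine ⟨by simpa using hm, fun i => ?_⟩
    rw [List.getD_eq_getElem?_getD, List.getElem?_replicate]
    split <;> rfl
  · rintro ⟨hlen, hleaf⟩
    refine ⟨cs.length, hlen, congrArg node (List.eq_replicate_iff.2 ⟨rfl, fun c hc => ?_⟩)⟩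
    obtain ⟨i, hi, rfl⟩ := List.getElem_of_mem hc
    rw [← List.getD_eq_getElem _ leaf hi, hleaf]

theorem isCorolla_trunkTree_iff {cs : List PTree} (hcs : 2 ≤ cs.length) {c : Finset (List ℕ)}
    (hc : c ∈ cutsFinset (node cs)) (hroot : c ≠ {[]}) :
    IsCorolla (trunkTree (node cs) c) ↔ c = childCut cs := by
  obtain ⟨ds, hds, hlen, hleaf⟩ := exists_trunkTree_eq_node (mt (eq_root_of_nil_mem hc) hroot) cs
  have childCut_subset_iff : childCut cs ⊆ c ↔ ∀ i, cs.getD i leaf = leaf ∨ [i] ∈ c := by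
    refine ⟨fun hsub i => or_iff_not_imp_left.2 fun hi => hsub (mem_childCut.2 ⟨i, hi, rfl⟩),
      fun h v hv => ?_⟩
    obtain ⟨i, hi, rfl⟩ := mem_childCut.1 hv
    exact (h i).resolve_left hi
  rw [hds, isCorolla_node, hlen, and_iff_right hcs]
  simp only [hleaf]
  rw [← childCut_subset_iff]
  exact ⟨eq_childCut_of_subset hc hroot, fun h => h.ge⟩

end Cuts

/-! ### Convolution of characters on decorated forests -/

section Characters

variable {A : Type*}

/-- Characters of the algebra of decorated forests, the counterpart of `IsCharW`. -/
def IsCharD (f : DForest A → ℂ) : Prop := f [] = 1 ∧ ∀ F G, f (F ++ G) = f F * f G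

theorem IsCharD.cons {f : DForest A → ℂ} (hf : IsCharD f) (d : PTree × List A) (F : DForest A) :
    f (d :: F) = f [d] * f F := hf.2 [d] F

theorem IsCharD.apply_eq_prod {f : DForest A → ℂ} (hf : IsCharD f) (F : DForest A) :
    f F = (F.map fun d => f [d]).prod := by
  induction F with
  | nil => exact hf.1
  | cons d F ih => rw [hf.cons, ih, List.map_cons, List.prod_cons]

theorem IsCharD.apply_prunePart {f : DForest A → ℂ} (hf : IsCharD f) (d : PTree × List A)
    (c : Finset (List ℕ)) : f (prunePart d c) = ∏ v ∈ c, f [(subtree! d.1 v,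
      (d.2.drop (leavesBefore d.1 v)).take (numSectors (subtree! d.1 v)))] := by
  rw [hf.apply_eq_prod, prunePart, List.map_map, ← Finset.prod_map_toList]
  exact ((sortCut_perm d.1 c).map _).prod_eq

theorem isCharD_epsD : IsCharD (epsD : DForest A → ℂ) := by
  refine ⟨if_pos rfl, fun F G => ?_⟩
  by_cases hF : F = [] <;> simp [epsD, hF]

theorem isCharD_charD [Ring A] (φ : A → ℂ) : IsCharD (charD φ) :=
  ⟨by simp [charD], fun F G => by simp [charD]⟩

variable [Zero A]

theorem convD_cons (f g : DForest A → ℂ) (d : PTree × List A) (F : DForest A) :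
    convD f g (d :: F) = ∑ c ∈ cutsFinset d.1, ((forestSplits F).map fun pr =>
      f (trunkPart d c ++ pr.1) * g (prunePart d c ++ pr.2)).sum := by
  rw [convD, forestSplits, List.map_flatMap, List.flatMap, List.sum_flatten, List.map_map,
    ← Finset.sum_map_toList]
  simp only [Function.comp_def, List.map_map]

theorem convD_singleton (f g : DForest A → ℂ) (d : PTree × List A) :
    convD f g [d] = ∑ c ∈ cutsFinset d.1, f (trunkPart d c) * g (prunePart d c) := by
  simp [convD_cons, forestSplits]

theorem isCharD_convD {f g : DForest A → ℂ} (hf : IsCharD f) (hg : IsCharD g) :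
    IsCharD (convD f g) := by
  have convD_cons_eq_mul (d : PTree × List A) (F : DForest A) :
      convD f g (d :: F) = convD f g [d] * convD f g F := by
    rw [convD_cons, convD_singleton, Finset.sum_mul]
    refine Finset.sum_congr rfl fun c _ => ?_
    simp only [convD, hf.2, hg.2, ← List.sum_map_mul_left, mul_mul_mul_comm]
  have convD_nil : convD f g [] = 1 := by simp [convD, forestSplits, hf.1, hg.1]
  refine ⟨convD_nil, fun F G => ?_⟩
  induction F with
  | nil => rw [List.nil_append, convD_nil, one_mul]
  | cons d F ih => rw [List.cons_append, convD_cons_eq_mul, ih, convD_cons_eq_mul d F, mul_assoc]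

theorem isCharD_convPowD {f : DForest A → ℂ} (hf : IsCharD f) (k : ℕ) :
    IsCharD (convPowD f k) := by
  induction k with
  | zero => exact isCharD_epsD
  | succ k ih => exact isCharD_convD hf ih

end Characters

section RootCorolla

variable {A : Type*}

theorem prunePart_root {d : PTree × List A} (hd : d.2.length ≤ numSectors d.1) :
    prunePart d {[]} = [d] := by
  rw [prunePart, sortCut_singleton, List.map_singleton, subtree!_nil, leavesBefore_nil,
    List.drop_zero, List.take_of_length_le hd]

open Classical in
/-- The value of a functional on a decorated tree, the single leaf being the unit. -/
noncomputable def treeVal (g : DForest A → ℂ) (t : PTree) (w : List A) : ℂ :=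
  if t = leaf then 1 else g [(t, w)]

theorem treeVal_leaf (g : DForest A → ℂ) (w : List A) : treeVal g leaf w = 1 := if_pos rfl

theorem treeVal_of_ne_leaf (g : DForest A → ℂ) {t : PTree} (ht : t ≠ leaf) (w : List A) :
    treeVal g t w = g [(t, w)] := if_neg ht

theorem IsCharD.apply_prunePart_childCut {g : DForest A → ℂ} (hg : IsCharD g) (cs : List PTree)
    (w : List A) : g (prunePart (node cs, w) (childCut cs)) = ∏ i : Fin cs.length,
      treeVal g cs[i] ((w.drop (leafOffset cs i)).take (numSectors cs[i])) := by
  rw [hg.apply_prunePart, childCut, Finset.prod_image fun i _ j _ h => Fin.ext (List.cons.inj h).1,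
    Finset.prod_filter]
  refine Finset.prod_congr rfl fun i _ => ?_
  split_ifs with hi
  · rw [treeVal_of_ne_leaf g hi, subtree!_singleton i.2, leavesBefore_singleton i.2]
    rfl
  · rw [not_not.1 hi, treeVal_leaf]

/-- The contribution to `node cs` of the cut at all internal children of the root: `f` is applied
to the word of the sectors at the root, and `E` to each child with the word of its sectors. -/
noncomputable def rootProd [Zero A] {R : Type*} [CommMonoid R] (f : List A → R)
    (E : PTree → List A → R) (cs : List PTree) (w : List A) : R :=
  f (trunkWord (node cs) (childCut cs) w) * ∏ i : Fin cs.length,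
    E cs[i] ((w.drop (leafOffset cs i)).take (numSectors cs[i]))

variable [Ring A] (φ : A → ℂ)

theorem charD_trunkPart_root (d : PTree × List A) : charD φ (trunkPart d {[]}) = 1 := by
  rw [trunkPart, if_pos (trunkTree_root d.1), (isCharD_charD φ).1]

open Classical in
theorem charD_trunkPart_node {cs : List PTree} (hcs : 2 ≤ cs.length) {c : Finset (List ℕ)}
    (hc : c ∈ cutsFinset (node cs)) (hroot : c ≠ {[]}) (w : List A) :
    charD φ (trunkPart (node cs, w) c) =
      if c = childCut cs then φ (trunkWord (node cs) c w).prod else 0 := by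
  rw [trunkPart, if_neg (mt (trunkTree_eq_leaf_iff (node_ne_leaf hcs) hc).1 hroot), charD,
    List.map_singleton, List.prod_singleton]
  simp only [isCorolla_trunkTree_iff hcs hc hroot]

/-- Only two cuts contribute: the trunk must be trivial or a corolla. -/
theorem convD_charD_node {g : DForest A → ℂ} (hg : IsCharD g) {cs : List PTree}
    (hcs : 2 ≤ cs.length) {w : List A} (hw : w.length ≤ numSectors (node cs)) :
    convD (charD φ) g [(node cs, w)] =
      g [(node cs, w)] + rootProd (fun s => φ s.prod) (treeVal g) cs w := by
  classical
  rw [convD_singleton, ← Finset.add_sum_erase _ _ (root_mem_cutsFinset (node_ne_leaf hcs)),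
    charD_trunkPart_root, one_mul, prunePart_root hw,
    Finset.sum_eq_single_of_mem (childCut cs)
      (Finset.mem_erase.2 ⟨childCut_ne_root cs, childCut_mem_cutsFinset cs⟩),
    charD_trunkPart_node φ hcs (childCut_mem_cutsFinset cs) (childCut_ne_root cs), if_pos rfl,
    hg.apply_prunePart_childCut, rootProd]
  intro c hc hne
  rw [charD_trunkPart_node φ hcs (Finset.mem_of_mem_erase hc) (Finset.ne_of_mem_erase hc),
    if_neg hne, zero_mul]

end RootCorolla

section Binomial

variable {A : Type*}

/-- A nontrivial tree with at most as many decorations as sectors. This is all that the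
counitality of the coproduct requires, and it is inherited by the trees of a pruning. -/
def IsDecorated (d : PTree × List A) : Prop := d.1 ≠ leaf ∧ d.2.length ≤ numSectors d.1

theorem GoodTree.isDecorated {d : PTree × List A} (hd : GoodTree d) : IsDecorated d :=
  ⟨hd.2.1, hd.2.2.le⟩

theorem isDecorated_of_mem_prunePart {d e : PTree × List A} {c : Finset (List ℕ)}
    (hc : c ∈ cutsFinset d.1) (he : e ∈ prunePart d c) : IsDecorated e := by
  obtain ⟨v, hv, rfl⟩ := List.mem_map.1 he
  obtain ⟨cs, subtree_eq, hcs⟩ := (mem_cutsFinset.1 hc).1 v (mem_sortCut.1 hv)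
  refine ⟨?_, List.length_take_le _ _⟩
  rwa [subtree!, subtree_eq, Option.getD_some, Ne, node.injEq]

variable [Zero A]

theorem isDecorated_of_mem_forestSplits {F : DForest A} {pr : DForest A × DForest A}
    (hpr : pr ∈ forestSplits F) : ∀ d ∈ pr.2, IsDecorated d := by
  induction F generalizing pr with
  | nil =>
    rw [forestSplits, List.mem_singleton] at hpr
    simp [hpr]
  | cons d F ih =>
    obtain ⟨c, hc, h⟩ := List.mem_flatMap.1 hpr
    obtain ⟨q, hq, rfl⟩ := List.mem_map.1 h
    intro e he
    rcases List.mem_append.1 he with he | he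
    · exact isDecorated_of_mem_prunePart (Finset.mem_toList.1 hc) he
    · exact ih hq e he

theorem convD_congr_right {f g h : DForest A → ℂ}
    (hgh : ∀ F, (∀ d ∈ F, IsDecorated d) → g F = h F) (F : DForest A) :
    convD f g F = convD f h F :=
  congrArg List.sum <| List.map_congr_left fun pr hpr => by
    rw [hgh _ (isDecorated_of_mem_forestSplits hpr)]

theorem epsD_convD (g : DForest A → ℂ) (F : DForest A) (hF : ∀ d ∈ F, IsDecorated d) :
    convD epsD g F = g F := by
  induction F generalizing g with
  | nil => simp [convD, forestSplits, epsD]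
  | cons d F ih =>
    obtain ⟨⟨hd, hlen⟩, hF⟩ := List.forall_mem_cons.1 hF
    rw [convD_cons, Finset.sum_eq_single_of_mem {[]} (root_mem_cutsFinset hd)]
    · rw [prunePart_root hlen, trunkPart, if_pos (trunkTree_root d.1)]
      exact ih (fun G => g (d :: G)) hF
    · intro c hc hroot
      have trunk_ne : trunkTree d.1 c ≠ leaf := mt (trunkTree_eq_leaf_iff hd hc).1 hroot
      simp [trunkPart, trunk_ne, epsD]

theorem convD_add_left (f f' g : DForest A → ℂ) (F : DForest A) :
    convD (fun G => f G + f' G) g F = convD f g F + convD f' g F := by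
  simp only [convD, add_mul, List.sum_map_add]

theorem convD_sum_right (f : DForest A → ℂ) {ι : Type*} (s : Finset ι) (c : ι → ℂ)
    (g : ι → DForest A → ℂ) (F : DForest A) :
    convD f (fun G => ∑ j ∈ s, c j * g j G) F = ∑ j ∈ s, c j * convD f (g j) F := by
  simp only [convD, ← List.sum_map_mul_left, Finset.mul_sum, mul_left_comm (f _)]
  induction forestSplits F with
  | nil => simp
  | cons pr L ih => simp only [List.map_cons, List.sum_cons, ih, Finset.sum_add_distrib]

theorem convPowD_charD {A : Type*} [Ring A] (φ : A → ℂ) (k : ℕ) (F : DForest A)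
    (hF : ∀ d ∈ F, IsDecorated d) : convPowD (charD φ) k F =
      ∑ j ∈ Finset.range (k + 1), (k.choose j : ℂ) * convPowD (charHatD φ) j F := by
  induction k generalizing F with
  | zero => simp [convPowD]
  | succ k ih =>
    have charD_eq : (charD φ : DForest A → ℂ) = fun G => epsD G + charHatD φ G :=
      funext fun G => (add_sub_cancel _ _).symm
    have convD_charD (j : ℕ) : convD (charD φ) (convPowD (charHatD φ) j) F =
        convPowD (charHatD φ) j F + convPowD (charHatD φ) (j + 1) F := by
      rw [charD_eq, convD_add_left, epsD_convD _ F hF, convPowD]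
    rw [convPowD, convD_congr_right ih, convD_sum_right,
      Finset.sum_choose_succ_mul fun j _ => convPowD (charHatD φ) j F, ← Finset.sum_add_distrib]
    simp only [convD_charD, mul_add]

end Binomial

section Polynomials

open Polynomial

variable {A : Type*} [Ring A] (φ : A → ℂ)

theorem exists_polynomial_tree {t : PTree} (ht : IsSchroder t) {w : List A}
    (hw : w.length ≤ numSectors t) :
    ∃ P : ℂ[X], ∀ k : ℕ, treeVal (convPowD (charD φ) k) t w = P.eval (k : ℂ) := by
  induction ht generalizing w with
  | leaf => exact ⟨1, fun k => by rw [treeVal_leaf, eval_one]⟩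
  | node cs two_le _ ih =>
    choose P hP using fun i : Fin cs.length => ih cs[i] (List.getElem_mem _)
      (List.length_take_le (numSectors cs[i]) (w.drop (leafOffset cs i)))
    refine exists_polynomial_of_fwdDiff
      (Q := C (φ (trunkWord (node cs) (childCut cs) w).prod) * ∏ i, P i) fun k => ?_
    simp only [treeVal_of_ne_leaf _ (node_ne_leaf two_le)]
    rw [convPowD, convD_charD_node φ (isCharD_convPowD (isCharD_charD φ) k) two_le hw, rootProd,
      eval_mul, eval_C, eval_prod]
    simp only [hP]

theorem exists_polynomial_forest {F : DForest A} (hF : GoodForest F) :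
    ∃ P : ℂ[X], ∀ k : ℕ, convPowD (charD φ) k F = P.eval (k : ℂ) := by
  induction F with
  | nil => exact ⟨1, fun k => by rw [(isCharD_convPowD (isCharD_charD φ) k).1, eval_one]⟩
  | cons d F ih =>
    obtain ⟨⟨schroder, ne_leaf, length_eq⟩, hF⟩ := List.forall_mem_cons.1 hF
    obtain ⟨P, hP⟩ := ih hF
    obtain ⟨Q, hQ⟩ := exists_polynomial_tree φ schroder length_eq.le
    refine ⟨Q * P, fun k => ?_⟩
    rw [(isCharD_convPowD (isCharD_charD φ) k).cons,
      ← treeVal_of_ne_leaf (convPowD (charD φ) k) ne_leaf, hP, hQ, eval_mul]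

theorem logStarD_eq_derivative_eval_zero {F : DForest A} (hF : GoodForest F) {P : ℂ[X]}
    (hP : ∀ k : ℕ, convPowD (charD φ) k F = P.eval (k : ℂ)) :
    logStarD φ F = (derivative P).eval 0 :=
  logSeries_eq_derivative_eval_zero fun k => by
    rw [← hP, convPowD_charD φ k F fun d hd => (hF d hd).isDecorated]

end Polynomials

/-! ### The sectors at the root -/

section RootSectors

theorem removedIdx_childCut {cs : List PTree} {i : ℕ} :
    RemovedIdx (node cs) (childCut cs) i ↔ ∃ j, ∃ h : j < cs.length,
      leafOffset cs j ≤ i ∧ i < leafOffset cs j + numSectors cs[j] := by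
  constructor
  · rintro ⟨v, hv, hi⟩
    obtain ⟨j, hj, rfl⟩ := mem_childCut.1 hv
    have j_lt : j < cs.length := by
      by_contra! hle
      exact hj (List.getD_eq_default _ _ hle)
    rw [leavesBefore_singleton j_lt, subtree!_singleton j_lt] at hi
    exact ⟨j, j_lt, hi⟩
  · rintro ⟨j, j_lt, hi⟩
    refine ⟨[j], mem_childCut.2 ⟨j, fun hleaf => ?_, rfl⟩, ?_⟩
    · rw [List.getD_eq_getElem _ _ j_lt] at hleaf
      rw [hleaf, numSectors_leaf] at hi
      exact absurd hi.2 (not_lt.2 hi.1)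
    · rwa [leavesBefore_singleton j_lt, subtree!_singleton j_lt]

theorem removedIdx_childCut_of_lt {c : PTree} (cs : List PTree) {i : ℕ} (hi : i < numSectors c) :
    RemovedIdx (node (c :: cs)) (childCut (c :: cs)) i :=
  removedIdx_childCut.2 ⟨0, Nat.succ_pos _, by simpa [leafOffset_zero] using hi⟩

theorem not_removedIdx_childCut (c : PTree) (cs : List PTree) :
    ¬ RemovedIdx (node (c :: cs)) (childCut (c :: cs)) (numSectors c) := by
  rw [removedIdx_childCut]
  rintro ⟨_ | j, _, hle, hlt⟩
  · rw [leafOffset_zero, List.getElem_cons_zero] at hlt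
    omega
  · rw [leafOffset_cons_succ] at hle
    omega

theorem removedIdx_childCut_add {c : PTree} {cs : List PTree} {i : ℕ} :
    RemovedIdx (node (c :: cs)) (childCut (c :: cs)) (numSectors c + 1 + i) ↔
      RemovedIdx (node cs) (childCut cs) i := by
  rw [removedIdx_childCut, removedIdx_childCut]
  constructor
  · rintro ⟨_ | j, hj, hle, hlt⟩
    · rw [leafOffset_zero, List.getElem_cons_zero] at hlt
      omega
    · rw [leafOffset_cons_succ] at hle
      rw [leafOffset_cons_succ, List.getElem_cons_succ] at hlt
      exact ⟨j, Nat.lt_of_succ_lt_succ hj, by omega, by omega⟩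
  · rintro ⟨j, hj, hle, hlt⟩
    refine ⟨j + 1, Nat.succ_lt_succ hj, ?_, ?_⟩
    · rw [leafOffset_cons_succ]
      omega
    · rw [leafOffset_cons_succ, List.getElem_cons_succ]
      omega

variable {A : Type*}

theorem exists_eq_append_cons {c : PTree} {cs : List PTree} (hcs : cs ≠ []) {w : List A}
    (hw : w.length = numSectors (node (c :: cs))) :
    ∃ u a v, w = u ++ a :: v ∧ u.length = numSectors c := by
  have lt_length : numSectors c < w.length := by
    rw [hw, numSectors_cons c hcs]
    omega
  exact ⟨w.take (numSectors c), w[numSectors c], w.drop (numSectors c + 1),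
    by rw [← List.drop_eq_getElem_cons, List.take_append_drop],
    List.length_take_of_le lt_length.le⟩

variable [Zero A]

theorem trunkWord_childCut_eq_nil {c : PTree} (cs : List PTree) {u : List A}
    (hu : u.length = numSectors c) :
    trunkWord (node (c :: cs)) (childCut (c :: cs)) u = [] := by
  rw [trunkWord, List.map_eq_nil_iff, List.filter_eq_nil_iff]
  intro i hi
  rw [List.mem_range, hu] at hi
  simpa using removedIdx_childCut_of_lt cs hi

theorem trunkWord_childCut_append_cons {c : PTree} (cs : List PTree) {u : List A}
    (hu : u.length = numSectors c) (a : A) (v : List A) :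
    trunkWord (node (c :: cs)) (childCut (c :: cs)) (u ++ a :: v) =
      a :: trunkWord (node cs) (childCut cs) v := by
  classical
  have sectors_u := trunkWord_childCut_eq_nil cs hu
  rw [trunkWord, List.map_eq_nil_iff] at sectors_u
  have sector_a : ¬ RemovedIdx (node (c :: cs)) (childCut (c :: cs)) u.length :=
    hu ▸ not_removedIdx_childCut c cs
  have letter_a : (u ++ a :: v).getD u.length 0 = a := by simp
  have sectors_v (i : ℕ) : RemovedIdx (node (c :: cs)) (childCut (c :: cs)) (u.length + 1 + i) ↔
      RemovedIdx (node cs) (childCut cs) i := by rw [hu, removedIdx_childCut_add]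
  have letters_v (i : ℕ) : (u ++ a :: v).getD (u.length + 1 + i) 0 = v.getD i 0 := by
    rw [List.getD_append_right _ _ _ _ (by omega), add_assoc, Nat.add_sub_cancel_left, add_comm,
      List.getD_cons_succ]
  have length_eq : (u ++ a :: v).length = u.length + 1 + v.length := by
    rw [List.length_append, List.length_cons, add_right_comm, add_assoc]
  rw [trunkWord, length_eq, List.range_add, List.range_succ]
  simp only [List.filter_append, sectors_u, List.nil_append, List.filter_singleton, sector_a,
    not_false_eq_true, decide_true, cond_true, List.filter_map, List.map_cons, List.map_map,
    letter_a, Function.comp_def, sectors_v, letters_v, List.singleton_append,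
    trunkWord]

theorem trunkWord_childCut_ne_nil {cs : List PTree} (hcs : 2 ≤ cs.length) {w : List A}
    (hw : w.length = numSectors (node cs)) : trunkWord (node cs) (childCut cs) w ≠ [] := by
  obtain _ | ⟨c, cs⟩ := cs
  · exact absurd hcs (Nat.not_succ_le_zero 1)
  · obtain ⟨u, a, v, rfl, hu⟩ :=
      exists_eq_append_cons (List.ne_nil_of_length_pos (Nat.le_of_succ_le_succ hcs)) hw
    rw [trunkWord_childCut_append_cons cs hu]
    exact List.cons_ne_nil _ _

variable {R : Type*} [CommMonoid R] (f : List A → R) (E : PTree → List A → R)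

theorem rootProd_singleton {c : PTree} {u : List A} (hu : u.length = numSectors c) :
    rootProd f E [c] u = f [] * E c u := by
  rw [rootProd, trunkWord_childCut_eq_nil _ hu]
  simp [leafOffset_zero, ← hu]

theorem rootProd_cons {c : PTree} (cs : List PTree) {u : List A} (hu : u.length = numSectors c)
    (a : A) (v : List A) :
    rootProd f E (c :: cs) (u ++ a :: v) = E c u * rootProd (fun s => f (a :: s)) E cs v := by
  have prod_children : ∏ i : Fin (c :: cs).length, E (c :: cs)[i]
      (((u ++ a :: v).drop (leafOffset (c :: cs) i)).take (numSectors (c :: cs)[i])) =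
      E c u * ∏ i : Fin cs.length, E cs[i]
        ((v.drop (leafOffset cs i)).take (numSectors cs[i])) := by
    refine (Fin.prod_univ_succ (n := cs.length) _).trans ?_
    congr 1
    · simp [leafOffset_zero, ← hu]
    · refine Finset.prod_congr rfl fun i _ => ?_
      simp only [Fin.val_succ, leafOffset_cons_succ, ← hu, Fin.getElem_fin, List.getElem_cons_succ,
        add_assoc, add_comm 1, List.drop_length_add_append, List.drop_succ_cons]
  rw [rootProd, trunkWord_childCut_append_cons _ hu, prod_children, mul_left_comm, rootProd]

end RootSectors

/-! ### Sums over Schröder trees -/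

section Sums

/-- The nonempty lists of Schröder trees with `n + 1` leaves in total. -/
def schroderForests (n : ℕ) : Set (List PTree) :=
  {cs | cs ≠ [] ∧ (∀ c ∈ cs, IsSchroder c) ∧ (cs.map numLeaves).sum = n + 1}

theorem singleton_mem_schroderForests {n : ℕ} {t : PTree} :
    [t] ∈ schroderForests n ↔ t ∈ ST n := by
  simp [schroderForests, ST]

theorem cons_mem_schroderForests {n : ℕ} {c : PTree} {cs : List PTree} (hcs : cs ≠ []) :
    c :: cs ∈ schroderForests n ↔ ∃ i < n, c ∈ ST i ∧ cs ∈ schroderForests (n - (i + 1)) := by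
  have pos_sum : 0 < (cs.map numLeaves).sum := numLeaves_node hcs ▸ numLeaves_pos (node cs)
  have pos_c := numLeaves_pos c
  simp only [schroderForests, ST, Set.mem_ofPred_eq, List.map_cons, List.sum_cons,
    List.forall_mem_cons]
  constructor
  · rintro ⟨_, ⟨hc, hall⟩, hsum⟩
    exact ⟨numLeaves c - 1, by omega, ⟨hc, by omega⟩, hcs, hall, by omega⟩
  · rintro ⟨i, hi, ⟨hc, hcard⟩, _, hall, hsum⟩
    exact ⟨List.cons_ne_nil _ _, ⟨hc, hall⟩, by omega⟩

theorem node_mem_ST {n : ℕ} {cs : List PTree} (hcs : cs ≠ []) :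
    node cs ∈ ST n ↔ cs ∈ schroderForests n ∧ cs.length ≠ 1 := by
  have length_pos := List.length_pos_of_ne_nil hcs
  simp only [ST, schroderForests, Set.mem_ofPred_eq, numLeaves_node hcs]
  constructor
  · rintro ⟨_ | ⟨_, two_le, hall⟩, hsum⟩
    · exact absurd rfl hcs
    · exact ⟨⟨hcs, hall, hsum⟩, by omega⟩
  · rintro ⟨⟨_, hall, hsum⟩, hlen⟩
    exact ⟨.node _ (by omega) hall, hsum⟩

theorem finite_ST_and_schroderForests (n : ℕ) : (ST n).Finite ∧ (schroderForests n).Finite := by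
  induction n using Nat.strong_induction_on with
  | _ n ih =>
    have finite_forests : {cs ∈ schroderForests n | cs.length ≠ 1}.Finite := by
      refine ((Set.finite_lt_nat n).biUnion (t := fun i =>
        Set.image2 List.cons (ST i) (schroderForests (n - (i + 1)))) fun i hi =>
          (ih i hi).1.image2 _ (ih _ (Nat.sub_lt_self i.succ_pos hi)).2).subset ?_
      rintro (_ | ⟨c, cs⟩) ⟨h, hlen⟩
      · exact absurd rfl h.1
      · have hcs : cs ≠ [] := fun cs_nil => hlen (cs_nil ▸ rfl)
        obtain ⟨i, hi, hc⟩ := (cons_mem_schroderForests hcs).1 h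
        exact Set.mem_biUnion hi ⟨c, hc.1, cs, hc.2, rfl⟩
    have finite_trees : (ST n).Finite := by
      refine ((finite_forests.image node).insert leaf).subset fun t ht => ?_
      by_cases hleaf : t = leaf
      · exact Or.inl hleaf
      · obtain ⟨cs, rfl, hcs⟩ := exists_eq_node_of_ne_leaf hleaf
        exact Or.inr ⟨cs, (node_mem_ST hcs).1 ht, rfl⟩
    refine ⟨finite_trees, ((finite_trees.image ([·])).union finite_forests).subset fun cs hcs => ?_⟩
    by_cases hlen : cs.length = 1
    · obtain ⟨t, rfl⟩ := List.length_eq_one_iff.1 hlen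
      exact Or.inl ⟨t, singleton_mem_schroderForests.1 hcs, rfl⟩
    · exact Or.inr ⟨hcs, hlen⟩

/-- The finite set `ST n` as a `Finset`. -/
noncomputable def treesFinset (n : ℕ) : Finset PTree :=
  (finite_ST_and_schroderForests n).1.toFinset

/-- The finite set `schroderForests n` as a `Finset`. -/
noncomputable def forestsFinset (n : ℕ) : Finset (List PTree) :=
  (finite_ST_and_schroderForests n).2.toFinset

theorem mem_treesFinset {n : ℕ} {t : PTree} : t ∈ treesFinset n ↔ t ∈ ST n :=
  Set.Finite.mem_toFinset _

theorem mem_forestsFinset {n : ℕ} {cs : List PTree} :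
    cs ∈ forestsFinset n ↔ cs ∈ schroderForests n :=
  Set.Finite.mem_toFinset _

theorem numSectors_of_mem_treesFinset {n : ℕ} {t : PTree} (ht : t ∈ treesFinset n) :
    numSectors t = n := by
  rw [numSectors, (mem_treesFinset.1 ht).2, Nat.add_sub_cancel]

theorem ne_leaf_of_mem_treesFinset {n : ℕ} (hn : n ≠ 0) {t : PTree} (ht : t ∈ treesFinset n) :
    t ≠ leaf := by
  rintro rfl
  exact hn ((numSectors_of_mem_treesFinset ht).symm.trans numSectors_leaf)

theorem treesFinset_zero : treesFinset 0 = {leaf} := by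
  refine Finset.eq_singleton_iff_unique_mem.2
    ⟨mem_treesFinset.2 ⟨.leaf, numLeaves_leaf⟩, fun t ht => ?_⟩
  by_contra hleaf
  obtain ⟨_ | ⟨c, cs⟩, rfl, hne⟩ := exists_eq_node_of_ne_leaf hleaf
  · exact hne rfl
  · obtain ⟨hmem, hlen⟩ := (node_mem_ST hne).1 (mem_treesFinset.1 ht)
    have hcs : cs ≠ [] := fun cs_nil => hlen (cs_nil ▸ rfl)
    obtain ⟨i, hi, -⟩ := (cons_mem_schroderForests hcs).1 hmem
    exact Nat.not_lt_zero i hi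

variable {M : Type*} [AddCommMonoid M]

theorem sum_forestsFinset_length_eq_one (H : List PTree → M) (n : ℕ) :
    ∑ cs ∈ forestsFinset n with cs.length = 1, H cs = ∑ t ∈ treesFinset n, H [t] := by
  refine (Finset.sum_bij (fun t _ => [t]) (fun t ht => ?_) (fun _ _ _ _ => List.head_eq_of_cons_eq)
    (fun cs hcs => ?_) fun _ _ => rfl).symm
  · exact Finset.mem_filter.2 ⟨mem_forestsFinset.2
      (singleton_mem_schroderForests.2 (mem_treesFinset.1 ht)), List.length_singleton⟩
  · rw [Finset.mem_filter, mem_forestsFinset] at hcs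
    obtain ⟨t, rfl⟩ := List.length_eq_one_iff.1 hcs.2
    exact ⟨t, mem_treesFinset.2 (singleton_mem_schroderForests.1 hcs.1), rfl⟩

theorem sum_forestsFinset_length_ne_one (H : List PTree → M) (n : ℕ) :
    ∑ cs ∈ forestsFinset n with cs.length ≠ 1, H cs =
      ∑ i : Fin n, ∑ t ∈ treesFinset i, ∑ cs ∈ forestsFinset (n - (i + 1)), H (t :: cs) := by
  simp only [← Finset.sum_product', Finset.sum_sigma']
  have mem_index {i : Fin n} {t : PTree} {cs : List PTree} :
      (⟨i, t, cs⟩ : Σ _ : Fin n, PTree × List PTree) ∈ Finset.univ.sigma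
        (fun i : Fin n => treesFinset i ×ˢ forestsFinset (n - (i + 1))) ↔
      t ∈ ST i ∧ cs ∈ schroderForests (n - (i + 1)) := by
    simp [mem_treesFinset, mem_forestsFinset]
  refine (Finset.sum_bij (fun x _ => x.2.1 :: x.2.2) ?_ ?_ ?_ fun _ _ => rfl).symm
  · rintro ⟨i, t, cs⟩ h
    obtain ⟨ht, hcs⟩ := mem_index.1 h
    refine Finset.mem_filter.2 ⟨mem_forestsFinset.2
      ((cons_mem_schroderForests hcs.1).2 ⟨i, i.2, ht, hcs⟩), fun hlen => hcs.1 ?_⟩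
    exact List.length_eq_zero_iff.1 (Nat.succ.inj hlen)
  · rintro ⟨i, t, cs⟩ h ⟨i', t', cs'⟩ h' heq
    obtain ⟨rfl, rfl⟩ := List.cons.inj heq
    obtain rfl : i = i' :=
      Fin.ext (Nat.succ.inj ((mem_index.1 h).1.2.symm.trans (mem_index.1 h').1.2))
    rfl
  · rintro (_ | ⟨c, cs⟩) h <;> rw [Finset.mem_filter, mem_forestsFinset] at h
    · exact absurd rfl h.1.1
    · have hcs : cs ≠ [] := fun cs_nil => h.2 (cs_nil ▸ rfl)
      obtain ⟨i, hi, hmem⟩ := (cons_mem_schroderForests hcs).1 h.1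
      exact ⟨⟨⟨i, hi⟩, c, cs⟩, mem_index.2 hmem, rfl⟩

theorem sum_forestsFinset (H : List PTree → M) (n : ℕ) :
    ∑ cs ∈ forestsFinset n, H cs = ∑ t ∈ treesFinset n, H [t] +
      ∑ i : Fin n, ∑ t ∈ treesFinset i, ∑ cs ∈ forestsFinset (n - (i + 1)), H (t :: cs) := by
  rw [← Finset.sum_filter_add_sum_filter_not _ (fun cs => cs.length = 1),
    sum_forestsFinset_length_eq_one, sum_forestsFinset_length_ne_one]

theorem sum_treesFinset (H : PTree → M) {n : ℕ} (hn : n ≠ 0) :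
    ∑ t ∈ treesFinset n, H t = ∑ cs ∈ forestsFinset n with cs.length ≠ 1, H (node cs) := by
  refine (Finset.sum_bij (fun cs _ => node cs) (fun cs hcs => ?_)
    (fun _ _ _ _ => node.inj) (fun t ht => ?_) fun _ _ => rfl).symm
  · rw [Finset.mem_filter, mem_forestsFinset] at hcs
    exact mem_treesFinset.2 ((node_mem_ST hcs.1.1).2 hcs)
  · obtain ⟨cs, rfl, hcs⟩ := exists_eq_node_of_ne_leaf (ne_leaf_of_mem_treesFinset hn ht)
    rw [mem_treesFinset, node_mem_ST hcs] at ht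
    exact ⟨cs, Finset.mem_filter.2 ⟨mem_forestsFinset.2 ht.1, ht.2⟩, rfl⟩

variable {A R : Type*} [Zero A] [CommSemiring R]

/-- The subword of the letters at the root and the gaps filled by the children make up a splitting
of the word, and every splitting arises this way. -/
theorem sum_rootProd (f : List A → R) (E : PTree → List A → R) (w : List A) :
    ∑ cs ∈ forestsFinset w.length, rootProd f E cs w =
      wordConv f (fun l => ∑ t ∈ treesFinset l.length, E t l) w := by
  induction hn : w.length using Nat.strong_induction_on generalizing f w with
  | _ n ih =>
    subst hn
    rw [sum_forestsFinset, wordConv, gapConv_eq_sum_first_gap, Finset.mul_sum]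
    congr 1
    · exact Finset.sum_congr rfl fun t ht =>
        rootProd_singleton _ _ (numSectors_of_mem_treesFinset ht).symm
    · refine Finset.sum_congr rfl fun i _ => ?_
      have length_take : (w.take i).length = i := List.length_take_of_le i.2.le
      have length_drop_lt : (w.drop (i + 1)).length < w.length := by
        rw [List.length_drop]
        exact Nat.sub_lt_self i.val.succ_pos i.2
      rw [← ih _ length_drop_lt (fun s => f (w[i] :: s)) _ rfl, length_take, List.length_drop,
        Finset.sum_mul_sum]
      refine Finset.sum_congr rfl fun t ht => Finset.sum_congr rfl fun cs _ => ?_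
      rw [← rootProd_cons f E cs (length_take.trans (numSectors_of_mem_treesFinset ht).symm)]
      congr 1
      simp

end Sums

section TreeSum

variable {A : Type*}

/-- The value `g (ι w)` of a character `g` at the image of a word, the empty word being sent to the
unit. -/
noncomputable def treeSum (g : DForest A → ℂ) (w : List A) : ℂ :=
  ∑ t ∈ treesFinset w.length, treeVal g t w

theorem treeSum_nil (g : DForest A → ℂ) : treeSum g [] = 1 := by
  rw [treeSum, List.length_nil, treesFinset_zero, Finset.sum_singleton, treeVal_leaf]

theorem treeSum_of_ne_nil (g : DForest A → ℂ) {w : List A} (hw : w ≠ []) :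
    treeSum g w = ∑ t ∈ treesFinset w.length, g [(t, w)] :=
  Finset.sum_congr rfl fun _ ht =>
    treeVal_of_ne_leaf g (ne_leaf_of_mem_treesFinset (mt List.length_eq_zero_iff.1 hw) ht) w

variable [Ring A] (φ : A → ℂ)

theorem treeSum_convD_charD {g : DForest A → ℂ} (hg : IsCharD g) (w : List A) :
    treeSum (convD (charD φ) g) w = wordConv (onWord (charW φ)) (treeSum g) w := by
  by_cases hw : w = []
  · rw [hw, treeSum_nil, wordConv, gapConv, onWord_nil, (isCharW_charW φ).1, treeSum_nil, one_mul]
  have length_ne_zero : w.length ≠ 0 := mt List.length_eq_zero_iff.1 hw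
  have sum_singletons :
      ∑ t ∈ treesFinset w.length, rootProd (onWord (charW φ)) (treeVal g) [t] w =
        treeSum g w :=
    Finset.sum_congr rfl fun t ht => by
      rw [rootProd_singleton _ _ (numSectors_of_mem_treesFinset ht).symm, onWord_nil,
        (isCharW_charW φ).1, one_mul]
  calc treeSum (convD (charD φ) g) w
      = ∑ cs ∈ forestsFinset w.length with cs.length ≠ 1,
          (g [(node cs, w)] + rootProd (onWord (charW φ)) (treeVal g) cs w) := by
        rw [treeSum_of_ne_nil _ hw, sum_treesFinset _ length_ne_zero]
        refine Finset.sum_congr rfl fun cs hcs => ?_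
        obtain ⟨hmem, hlen⟩ := Finset.mem_filter.1 hcs
        rw [mem_forestsFinset] at hmem
        have two_le : 2 ≤ cs.length := by
          have := List.length_pos_of_ne_nil hmem.1
          omega
        have hsectors := numSectors_of_mem_treesFinset
          (mem_treesFinset.2 ((node_mem_ST hmem.1).2 ⟨hmem, hlen⟩))
        rw [convD_charD_node φ hg two_le hsectors.ge, rootProd, rootProd,
          onWord_charW φ (trunkWord_childCut_ne_nil two_le hsectors.symm)]
    _ = treeSum g w + ∑ cs ∈ forestsFinset w.length with cs.length ≠ 1,
          rootProd (onWord (charW φ)) (treeVal g) cs w := by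
        rw [Finset.sum_add_distrib, treeSum_of_ne_nil _ hw, sum_treesFinset _ length_ne_zero]
    _ = ∑ cs ∈ forestsFinset w.length, rootProd (onWord (charW φ)) (treeVal g) cs w := by
        rw [← sum_singletons,
          ← sum_forestsFinset_length_eq_one (rootProd (onWord (charW φ)) (treeVal g) · w),
          Finset.sum_filter_add_sum_filter_not]
    _ = wordConv (onWord (charW φ)) (treeSum g) w := sum_rootProd _ _ w

theorem treeSum_convPowD_charD (k : ℕ) :
    treeSum (convPowD (charD φ) k) = onWord (convPowW (charW φ) k) := by
  induction k with
  | zero =>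
    funext w
    by_cases hw : w = []
    · rw [hw, treeSum_nil, convPowW, onWord_epsW_nil]
    · rw [convPowW, onWord_epsW_of_ne_nil hw, treeSum_of_ne_nil _ hw]
      simp [convPowD, epsD]
  | succ k ih =>
    funext w
    rw [convPowD, treeSum_convD_charD φ (isCharD_convPowD (isCharD_charD φ) k), ih, convPowW,
      onWord_convW (isCharW_charW φ) (isCharW_convPowW (isCharW_charW φ) k)]

end TreeSum

end PTree

/-! ### The pullback along `ι` -/

section IotaPullback

open PTree Polynomial

variable {A : Type*}

open Classical in
/-- The forests appearing in the image of a sentence under `ι`. -/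
noncomputable def treeLists : Sentence A → Finset (List PTree)
  | [] => {[]}
  | w :: ws => Finset.image₂ List.cons (treesFinset w.letters.length) (treeLists ws)

theorem mem_treeLists {ws : Sentence A} {ts : List PTree} : ts ∈ treeLists ws ↔
    List.Forall₂ (fun t (w : WordNE A) => t ∈ ST w.letters.length) ts ws := by
  induction ws generalizing ts with
  | nil => rw [treeLists, Finset.mem_singleton, List.forall₂_nil_right_iff]
  | cons w ws ih =>
    simp only [treeLists, Finset.mem_image₂, List.forall₂_cons_right_iff, mem_treesFinset, ih]
    tauto

theorem iotaDual_eq_sum (f : DForest A → ℂ) (ws : Sentence A) :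
    iotaDual f ws = ∑ ts ∈ treeLists ws, f (ts.zip (ws.map WordNE.letters)) := by
  rw [← finsum_mem_coe_finset]
  exact congrArg (fun s => ∑ᶠ ts ∈ s, f (ts.zip (ws.map WordNE.letters)))
    (Set.ext fun _ => mem_treeLists.symm)

theorem goodForest_of_mem_treeLists {ws : Sentence A} {ts : List PTree} (h : ts ∈ treeLists ws) :
    GoodForest (ts.zip (ws.map WordNE.letters)) := by
  rw [mem_treeLists] at h
  induction h with
  | nil => exact List.forall_mem_nil _
  | @cons t w ts ws ht _ ih =>
    rw [← mem_treesFinset] at ht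
    have length_ne_zero : w.letters.length ≠ 0 := mt List.length_eq_zero_iff.1 w.letters_ne_nil
    exact List.forall_mem_cons.2 ⟨⟨(mem_treesFinset.1 ht).1,
      ne_leaf_of_mem_treesFinset length_ne_zero ht, (numSectors_of_mem_treesFinset ht).symm⟩, ih⟩

theorem sum_treeLists_cons {M : Type*} [AddCommMonoid M] (H : List PTree → M) (w : WordNE A)
    (ws : Sentence A) : ∑ ts ∈ treeLists (w :: ws), H ts =
      ∑ t ∈ treesFinset w.letters.length, ∑ ts ∈ treeLists ws, H (t :: ts) := by
  classical
  have cons_injective2 : Function.Injective2 (List.cons (α := PTree)) :=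
    fun _ _ _ _ => List.cons.inj
  rw [treeLists, ← Finset.image_uncurry_product, Finset.sum_image cons_injective2.uncurry.injOn,
    Finset.sum_product]
  rfl

theorem iotaDual_of_isCharD {f : DForest A → ℂ} (hf : IsCharD f) (ws : Sentence A) :
    iotaDual f ws = (ws.map fun w => treeSum f w.letters).prod := by
  rw [iotaDual_eq_sum]
  induction ws with
  | nil => rw [treeLists, Finset.sum_singleton]; exact hf.1
  | cons w ws ih =>
    rw [sum_treeLists_cons, List.map_cons, List.map_cons, List.prod_cons, ← ih,
      treeSum_of_ne_nil f w.letters_ne_nil, Finset.sum_mul_sum]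
    exact Finset.sum_congr rfl fun t _ => Finset.sum_congr rfl fun ts _ => hf.cons _ _

variable [Ring A] (φ : A → ℂ)

theorem iotaDual_convPowD_charD (k : ℕ) (s : Sentence A) :
    iotaDual (convPowD (charD φ) k) s = convPowW (charW φ) k s := by
  rw [iotaDual_of_isCharD (isCharD_convPowD (isCharD_charD φ) k),
    (isCharW_convPowW (isCharW_charW φ) k).apply_eq_prod, treeSum_convPowD_charD]

theorem exists_polynomial_iotaDual (s : Sentence A) :
    ∃ P : ℂ[X], (∀ k : ℕ, P.eval (k : ℂ) = convPowW (charW φ) k s) ∧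
      iotaDual (logStarD φ) s = (derivative P).eval 0 := by
  choose! P hP using fun F : DForest A => exists_polynomial_forest (F := F) φ
  refine ⟨∑ ts ∈ treeLists s, P (ts.zip (s.map WordNE.letters)), fun k => ?_, ?_⟩
  · rw [← iotaDual_convPowD_charD, iotaDual_eq_sum, eval_finsetSum]
    exact Finset.sum_congr rfl fun ts hts => (hP _ (goodForest_of_mem_treeLists hts) k).symm
  · rw [iotaDual_eq_sum, derivative_sum, eval_finsetSum]
    exact Finset.sum_congr rfl fun ts hts =>
      have good := goodForest_of_mem_treeLists hts
      logStarD_eq_derivative_eval_zero φ good (hP _ good)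

end IotaPullback

theorem iota_pullback_logStar_is_monotone_infinitesimal_character_general
    (A : Type*) [Ring A] (φ : A → ℂ) :
    IsInfCharW (iotaDual (PTree.logStarD φ) : Sentence A → ℂ) ∧
      charW φ = expStarW (iotaDual (PTree.logStarD φ)) := by
  choose P hP hρ using exists_polynomial_iotaDual φ
  exact ⟨isInfCharW_of_eval_eq_convPowW (isCharW_charW φ) hP hρ,
    eq_expStarW_of_eval_eq_convPowW (isCharW_charW φ) hP hρ⟩

/-- Let `(A, φ)` be a noncommutative probability space, `Φ` the character
on `T(T_+(A))` extending `φ`, `Φ̃` the character on `H_S(A)` extending `φ`,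
`ρ̃ = log^*(Φ̃)`, and `ι : T(T_+(A)) → H_S(A)` the algebra morphism with
`ι(a_1⋯a_n) = Σ_{t ∈ ST(n)} t ⊗ a_1⋯a_n`. Then `ρ := ρ̃ ∘ ι` is an infinitesimal
character on `T(T_+(A))` and `Φ = exp^*(ρ)`. -/
theorem iota_pullback_logStar_is_monotone_infinitesimal_character
    (A : Type*) [Ring A] [Algebra ℂ A] (φ : A →ₗ[ℂ] ℂ) (hφ : φ 1 = 1) :
    IsInfCharW (iotaDual (PTree.logStarD (fun x => φ x)) : Sentence A → ℂ) ∧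
    charW (fun x => φ x) = expStarW (iotaDual (PTree.logStarD (fun x => φ x))) :=
  iota_pullback_logStar_is_monotone_infinitesimal_character_general A fun x => φ x
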